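/- arXiv:2604.14462 — 2 statements merged into one kernel-verified Lean document; each statement's English description precedes it below -/
import Mathlib

section
/- For all m, n ≥ 0, the poset NC(S_{m,n}) admits a symmetric chain decomposition: its underlying set can be partitioned into saturated chains C (each consecutive pair of elements of C is a covering pair in NC(S_{m,n})) such that for each chain C, ρ(min C) + ρ(max C) = (m + n + 2) − 1, where ρ(π) = (m + n + 2) − (number of blocks of π). -/
open Finset

/-- A finpartition of a finite set of points in the plane is *noncrossing* if the
convex hulls (over `ℝ`) of its blocks are pairwise disjoint. -/
def IsNoncrossing {P : Finset ℂ} (π : Finpartition P) : Prop :=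
  (π.parts : Set (Finset ℂ)).Pairwise fun B₁ B₂ =>
    Disjoint (convexHull ℝ (B₁ : Set ℂ)) (convexHull ℝ (B₂ : Set ℂ))

/-- The poset `NC(P)` of noncrossing partitions of `P`, ordered by refinement:
`π ≤ μ` iff every block of `μ` is a union of blocks of `π`. -/
abbrev NC (P : Finset ℂ) : Type := {π : Finpartition P // IsNoncrossing π}

/-- The blocks of a noncrossing partition. -/
def NC.parts {P : Finset ℂ} (π : NC P) : Finset (Finset ℂ) := π.1.parts

/-- Two points lie in a common block of a noncrossing partition. -/
def NC.SameBlock {P : Finset ℂ} (π : NC P) (a b : ℂ) : Prop :=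
  ∃ B ∈ π.parts, a ∈ B ∧ b ∈ B

/-- The real point `x_k = -1 + 2k/(m+1)` of the semicircular configuration `S_{m,n}`. -/
noncomputable def Sx (m k : ℕ) : ℂ := -1 + 2 * (k : ℂ) / ((m : ℂ) + 1)

/-- The circle point `y_j = exp(iπj/(n+1))` of the semicircular configuration `S_{m,n}`. -/
noncomputable def Sy (n j : ℕ) : ℂ :=
  Complex.exp ((Real.pi : ℂ) * (j : ℂ) / ((n : ℂ) + 1) * Complex.I)

/-- The semicircular configuration `S_{m,n}`: the `m+2` real points
`x_k = -1 + 2k/(m+1)` for `k = 0, …, m+1` (including the endpoints `±1`) together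
with the `n` points `y_j = exp(iπj/(n+1))` for `j = 1, …, n` on the open upper
unit semicircle. -/
noncomputable def Sconfig (m n : ℕ) : Finset ℂ :=
  ((Finset.range (m + 2)).image fun k : ℕ => Sx m k) ∪
    ((Finset.Icc 1 n).image fun j : ℕ => Sy n j)


namespace SCDProof

def HasSCD {α : Type*} (R : α → α → Prop) (rk : α → ℕ) (S : Set α) (h : ℕ) : Prop :=
  ∃ C : Set (List α),
    (∀ l ∈ C, (∀ x ∈ l, x ∈ S) ∧ l.IsChain R ∧
      ∃ hne : l ≠ [], rk (l.head hne) + rk (l.getLast hne) = h) ∧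
    ∀ x ∈ S, ∃! l, l ∈ C ∧ x ∈ l

theorem HasSCD.iUnion {α ι : Type*} {R : α → α → Prop} {rk : α → ℕ} {h : ℕ} (S : ι → Set α)
    (hd : ∀ i j x, x ∈ S i → x ∈ S j → i = j) (hS : ∀ i, HasSCD R rk (S i) h) :
    HasSCD R rk (⋃ i, S i) h := by
  choose C hC1 hC2 using hS
  refine ⟨⋃ i, C i, ?_, ?_⟩
  · intro l hl
    obtain ⟨i, hi⟩ := Set.mem_iUnion.1 hl
    obtain ⟨h1, h2, h3⟩ := hC1 i l hi
    exact ⟨fun x hx => Set.mem_iUnion.2 ⟨i, h1 x hx⟩, h2, h3⟩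
  · intro x hx
    obtain ⟨i, hi⟩ := Set.mem_iUnion.1 hx
    obtain ⟨l, ⟨hl, hxl⟩, hu⟩ := hC2 i x hi
    refine ⟨l, ⟨Set.mem_iUnion.2 ⟨i, hl⟩, hxl⟩, ?_⟩
    rintro l' ⟨hl', hxl'⟩
    obtain ⟨j, hj⟩ := Set.mem_iUnion.1 hl'
    have := hd i j x hi ((hC1 j l' hj).1 x hxl')
    subst this
    exact hu l' ⟨hj, hxl'⟩

theorem HasSCD.image {α β : Type*} {R : α → α → Prop} {rk : α → ℕ} {h : ℕ} {S : Set α}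
    {R' : β → β → Prop} {rk' : β → ℕ} (f : α → β) (c : ℕ)
    (hinj : ∀ x ∈ S, ∀ y ∈ S, f x = f y → x = y)
    (hR : ∀ x ∈ S, ∀ y ∈ S, R x y → R' (f x) (f y))
    (hrk : ∀ x ∈ S, rk' (f x) = rk x + c)
    (hS : HasSCD R rk S h) : HasSCD R' rk' (f '' S) (h + 2 * c) := by
  obtain ⟨C, hC1, hC2⟩ := hS
  refine ⟨(List.map f) '' C, ?_, ?_⟩
  · rintro _ ⟨l, hl, rfl⟩
    obtain ⟨h1, h2, hne, h3⟩ := hC1 l hl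
    refine ⟨?_, ?_, by simpa using hne, ?_⟩
    · intro x hx
      obtain ⟨y, hy, rfl⟩ := List.mem_map.1 hx
      exact ⟨y, h1 y hy, rfl⟩
    · rw [List.isChain_map]
      rw [List.isChain_iff_getElem] at h2 ⊢
      intro i hi
      exact hR _ (h1 _ (List.getElem_mem _)) _ (h1 _ (List.getElem_mem _)) (h2 i hi)
    · rw [List.head_map, List.getLast_map, hrk _ (h1 _ (List.head_mem hne)),
        hrk _ (h1 _ (List.getLast_mem hne))]
      omega
  · rintro _ ⟨x, hx, rfl⟩
    obtain ⟨l, ⟨hl, hxl⟩, hu⟩ := hC2 x hx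
    refine ⟨l.map f, ⟨⟨l, hl, rfl⟩, List.mem_map_of_mem hxl⟩, ?_⟩
    rintro _ ⟨⟨l', hl', rfl⟩, hxl'⟩
    obtain ⟨y, hy, hyx⟩ := List.mem_map.1 hxl'
    have := hinj y ((hC1 l' hl').1 y hy) x hx hyx
    subst this
    rw [hu l' ⟨hl', hy⟩]

def PStep {α β : Type*} (R : α → α → Prop) (R' : β → β → Prop) (x y : α × β) : Prop :=
  (R x.1 y.1 ∧ x.2 = y.2) ∨ (x.1 = y.1 ∧ R' x.2 y.2)

theorem HasSCD.insertList {α : Type*} {R : α → α → Prop} {rk : α → ℕ} {h : ℕ} {S T : Set α}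
    (l : List α) (hl : l ≠ []) (hc : l.IsChain R) (hr : rk (l.head hl) + rk (l.getLast hl) = h)
    (hT : ∀ x, x ∈ T ↔ x ∈ l ∨ x ∈ S) (hd : ∀ x ∈ l, x ∉ S)
    (hS : HasSCD R rk S h) : HasSCD R rk T h := by
  have h0 : HasSCD R rk {x | x ∈ l} h :=
    ⟨{l}, by rintro _ rfl; exact ⟨fun x hx => hx, hc, hl, hr⟩,
      fun x hx => ⟨l, ⟨rfl, hx⟩, by rintro _ ⟨rfl, _⟩; rfl⟩⟩
  have := HasSCD.iUnion (R := R) (rk := rk) (h := h) (fun b : Bool => if b then S else {x | x ∈ l})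
    (by
      intro i j x hi hj
      cases i <;> cases j <;> simp_all) (by intro i; cases i <;> simpa)
  convert this using 1
  ext x
  simp [hT]

theorem HasSCD.empty {α : Type*} {R : α → α → Prop} {rk : α → ℕ} {h : ℕ} {S : Set α}
    (hS : ∀ x, x ∉ S) : HasSCD R rk S h :=
  ⟨∅, by simp, fun x hx => absurd hx (hS x)⟩

theorem grid {α β : Type*} {R : α → α → Prop} {R' : β → β → Prop} {rk : α → ℕ} {rk' : β → ℕ}
    (hR : ∀ x y, R x y → rk y = rk x + 1) (hR' : ∀ x y, R' x y → rk' y = rk' x + 1) (h : ℕ) :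
    ∀ (l : List α) (l' : List β), l.IsChain (fun x y => R y x) → l'.IsChain R' →
      l.Nodup → l'.Nodup →
      (∀ (h1 : l ≠ []) (h2 : l' ≠ []),
        rk (l.head h1) + rk (l.getLast h1) + (rk' (l'.head h2) + rk' (l'.getLast h2)) = h) →
      HasSCD (PStep R R') (fun z => rk z.1 + rk' z.2) {z | z.1 ∈ l ∧ z.2 ∈ l'} h
  | [], _, _, _, _, _, _ => HasSCD.empty (by simp)
  | _ :: _, [], _, _, _, _, _ => HasSCD.empty (by simp)
  | x :: l, y :: l', hl, hl', nl, nl', hh => by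
    have ih := grid hR hR' h l l' hl.tail hl'.tail (List.nodup_cons.1 nl).2 (List.nodup_cons.1 nl').2
      (by
        intro h1 h2
        have := hh (by simp) (by simp)
        obtain ⟨x1, l1, rfl⟩ := List.exists_cons_of_ne_nil h1
        obtain ⟨y1, l1', rfl⟩ := List.exists_cons_of_ne_nil h2
        have e1 := hR _ _ (List.isChain_cons_cons.1 hl).1
        have e2 := hR' _ _ (List.isChain_cons_cons.1 hl').1
        simp only [List.head_cons, List.getLast_cons_cons] at this ⊢
        omega)
    refine HasSCD.insertList (((x :: l).reverse.map (fun a => (a, y))) ++ l'.map (fun b => (x, b)))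
      (by simp) ?_ ?_ ?_ ?_ ih
    · rw [List.isChain_append]
      refine ⟨?_, ?_, ?_⟩
      · rw [List.isChain_map, List.isChain_reverse]
        refine hl.imp ?_
        intro a b hab
        exact Or.inl ⟨hab, rfl⟩
      · rw [List.isChain_map]
        exact hl'.tail.imp fun a b hab => Or.inr ⟨rfl, hab⟩
      · intro a ha b hb
        simp at ha
        subst ha
        cases l' with
        | nil => simp at hb
        | cons y1 l1 =>
          simp at hb
          subst hb
          exact Or.inr ⟨rfl, (List.isChain_cons_cons.1 hl').1⟩
    · have := hh (by simp) (by simp)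
      rcases List.eq_nil_or_concat' l' with rfl | ⟨l1, y1, rfl⟩
      · rcases List.eq_nil_or_concat' l with rfl | ⟨l2, x1, rfl⟩
        · simp at this ⊢; omega
        · simp [List.getLast_cons] at this ⊢; omega
      · rcases List.eq_nil_or_concat' l with rfl | ⟨l2, x1, rfl⟩
        · simp [List.getLast_cons] at this ⊢; omega
        · simp [List.getLast_cons] at this ⊢; omega
    · rintro ⟨a, b⟩
      simp
      grind
    · rintro ⟨a, b⟩
      simp
      grind

theorem nodup_of_chain {α : Type*} {R : α → α → Prop} {rk : α → ℕ}
    (hR : ∀ x y, R x y → rk y = rk x + 1) (l : List α) (hl : l.IsChain R) : l.Nodup := by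
  have h1 : l.IsChain (fun a b => rk a < rk b) := hl.imp fun a b h => by have := hR a b h; omega
  have : Trans (fun a b : α => rk a < rk b) (fun a b : α => rk a < rk b)
    (fun a b : α => rk a < rk b) := ⟨fun h h' => lt_trans h h'⟩
  exact h1.pairwise.imp fun {a b} h e => by subst e; exact lt_irrefl _ h

theorem HasSCD.prod {α β : Type*} {R : α → α → Prop} {R' : β → β → Prop} {rk : α → ℕ} {rk' : β → ℕ}
    (hR : ∀ x y, R x y → rk y = rk x + 1) (hR' : ∀ x y, R' x y → rk' y = rk' x + 1)
    {S : Set α} {S' : Set β} {h h' : ℕ} (hS : HasSCD R rk S h) (hS' : HasSCD R' rk' S' h') :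
    HasSCD (PStep R R') (fun z => rk z.1 + rk' z.2) (S ×ˢ S') (h + h') := by
  obtain ⟨C, hC1, hC2⟩ := hS
  obtain ⟨D, hD1, hD2⟩ := hS'
  have := HasSCD.iUnion (R := PStep R R') (rk := fun z => rk z.1 + rk' z.2) (h := h + h')
    (fun c : C × D => {z | z.1 ∈ c.1.1 ∧ z.2 ∈ c.2.1}) ?_ ?_
  · convert this using 1
    ext ⟨x, y⟩
    simp only [Set.mem_prod, Set.mem_iUnion, Set.mem_ofPred_eq]
    constructor
    · rintro ⟨hx, hy⟩
      obtain ⟨l, ⟨hl, hxl⟩, _⟩ := hC2 x hx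
      obtain ⟨l', ⟨hl', hxl'⟩, _⟩ := hD2 y hy
      exact ⟨⟨⟨l, hl⟩, ⟨l', hl'⟩⟩, hxl, hxl'⟩
    · rintro ⟨⟨⟨l, hl⟩, ⟨l', hl'⟩⟩, hxl, hxl'⟩
      exact ⟨(hC1 l hl).1 x hxl, (hD1 l' hl').1 y hxl'⟩
  · rintro ⟨⟨l, hl⟩, ⟨l', hl'⟩⟩ ⟨⟨k, hk⟩, ⟨k', hk'⟩⟩ ⟨x, y⟩ ⟨h1, h2⟩ ⟨h3, h4⟩
    have e1 := (hC2 x ((hC1 l hl).1 x h1)).unique ⟨hl, h1⟩ ⟨hk, h3⟩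
    have e2 := (hD2 y ((hD1 l' hl').1 y h2)).unique ⟨hl', h2⟩ ⟨hk', h4⟩
    subst e1 e2
    rfl
  · rintro ⟨⟨l, hl⟩, ⟨l', hl'⟩⟩
    obtain ⟨-, c1, n1, r1⟩ := hC1 l hl
    obtain ⟨-, c2, n2, r2⟩ := hD1 l' hl'
    have := grid hR hR' (h + h') l.reverse l' (by rw [List.isChain_reverse]; exact c1) c2
      (List.nodup_reverse.2 (nodup_of_chain hR l c1)) (nodup_of_chain hR' l' c2)
      (by intro _ _; simp; omega)
    simpa using this

structure T (p a b : ℕ) (r : Setoid ℕ) : Prop where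
  supp : ∀ x y, r x y → x = y ∨ (a ≤ x ∧ x < b ∧ a ≤ y ∧ y < b)
  nc : ∀ i j k l, i < j → j < k → k < l → r i k → r j l → r i j
  line : ∀ i j k, i < j → j < k → k < p → r i k → r i j

def desc (r : Setoid ℕ) : Set ℕ := {x | ∃ y, x < y ∧ r x y}

noncomputable def rk (r : Setoid ℕ) : ℕ := (desc r).ncard

def Step (r s : Setoid ℕ) : Prop := r ≤ s ∧ rk s = rk r + 1

def uni (i : ℕ) (r s : Setoid ℕ) : Setoid ℕ where
  r x y := (x ≤ i ∧ y ≤ i ∧ r x y) ∨ (i < x ∧ i < y ∧ s x y)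
  iseqv := by
    refine ⟨fun x => ?_, fun {x y} h => ?_, fun {x y z} h h' => ?_⟩
    · rcases le_or_gt x i with h | h
      · exact Or.inl ⟨h, h, r.refl' x⟩
      · exact Or.inr ⟨h, h, s.refl' x⟩
    · rcases h with ⟨h1, h2, h3⟩ | ⟨h1, h2, h3⟩
      · exact Or.inl ⟨h2, h1, r.symm' h3⟩
      · exact Or.inr ⟨h2, h1, s.symm' h3⟩
    · rcases h with ⟨h1, h2, h3⟩ | ⟨h1, h2, h3⟩ <;> rcases h' with ⟨k1, k2, k3⟩ | ⟨k1, k2, k3⟩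
      · exact Or.inl ⟨h1, k2, r.trans' h3 k3⟩
      · omega
      · omega
      · exact Or.inr ⟨h1, k2, s.trans' h3 k3⟩

def J (i e : ℕ) (r s : Setoid ℕ) : Setoid ℕ :=
  Setoid.comap (fun x => if x = e then i else x) (uni i r s)

theorem J_iff (i e : ℕ) (r s : Setoid ℕ) (x y : ℕ) :
    J i e r s x y ↔
      ((if x = e then i else x) ≤ i ∧ (if y = e then i else y) ≤ i ∧
        r (if x = e then i else x) (if y = e then i else y)) ∨
      (i < (if x = e then i else x) ∧ i < (if y = e then i else y) ∧
        s (if x = e then i else x) (if y = e then i else y)) := Iff.rfl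

def restr (a b : ℕ) (u : Setoid ℕ) : Setoid ℕ where
  r x y := x = y ∨ (a ≤ x ∧ x < b ∧ a ≤ y ∧ y < b ∧ u x y)
  iseqv := by
    refine ⟨fun x => Or.inl rfl, fun {x y} h => ?_, fun {x y z} h h' => ?_⟩
    · rcases h with rfl | ⟨h1, h2, h3, h4, h5⟩
      · exact Or.inl rfl
      · exact Or.inr ⟨h3, h4, h1, h2, u.symm' h5⟩
    · rcases h with rfl | ⟨h1, h2, h3, h4, h5⟩
      · exact h'
      · rcases h' with rfl | ⟨k1, k2, k3, k4, k5⟩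
        · exact Or.inr ⟨h1, h2, h3, h4, h5⟩
        · exact Or.inr ⟨h1, h2, k3, k4, u.trans' h5 k5⟩

theorem restr_iff (a b : ℕ) (u : Setoid ℕ) (x y : ℕ) :
    restr a b u x y ↔ x = y ∨ (a ≤ x ∧ x < b ∧ a ≤ y ∧ y < b ∧ u x y) := Iff.rfl

theorem T.desc_subset {p a b : ℕ} {r : Setoid ℕ} (h : T p a b r) :
    desc r ⊆ {x | a ≤ x ∧ x + 1 < b} := by
  rintro x ⟨y, hxy, hr⟩
  have := h.supp x y hr
  simp only [Set.mem_ofPred_eq]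
  omega

theorem T.desc_finite {p a b : ℕ} {r : Setoid ℕ} (h : T p a b r) : (desc r).Finite :=
  (Set.finite_Iio b).subset fun x hx => by
    have := h.desc_subset hx
    simp only [Set.mem_ofPred_eq] at this
    simp only [Set.mem_Iio]
    omega

theorem T.restr {p a b a' b' : ℕ} {r : Setoid ℕ} (h : T p a b r) : T p a' b' (restr a' b' r) := by
  constructor
  · intro x y hxy
    rw [restr_iff] at hxy
    omega
  · intro i j k l h1 h2 h3 h4 h5
    rw [restr_iff] at *
    have := h.nc i j k l h1 h2 h3
    grind
  · intro i j k h1 h2 h3 h4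
    rw [restr_iff] at *
    have := h.line i j k h1 h2 h3
    grind

section
variable {p a e i : ℕ}

theorem J_T {r s : Setoid ℕ} (ha : a ≤ i) (hi : i < e) (hp : p ≤ e ∨ i + 1 = e)
    (hr : T p a (i + 1) r) (hs : T p (i + 1) e s) : T p a (e + 1) (J i e r s) := by
  have rs := hr.supp
  have ss := hs.supp
  constructor
  · intro x y h
    rw [J_iff] at h
    grind
  · intro x j k l h1 h2 h3 h4 h5
    rw [J_iff] at *
    have r0 := r.refl' i
    have r1 := hr.nc x j k l h1 h2 h3
    have s1 := hs.nc x j k l h1 h2 h3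
    have r2 := hr.nc x j k i h1 h2
    have r3 := @r.symm'
    have r4 := @r.trans'
    have s3 := @s.symm'
    have s4 := @s.trans'
    grind
  · intro x j k h1 h2 h3 h4
    rw [J_iff] at *
    have r1 := hr.line x j k h1 h2 h3
    have s1 := hs.line x j k h1 h2 h3
    have r2 := hr.line x j i h1
    grind

theorem J_restr_left {r s : Setoid ℕ} (ha : a ≤ i) (hi : i < e)
    (hr : T p a (i + 1) r) : restr a (i + 1) (J i e r s) = r := by
  have rs := hr.supp
  have r0 := r.refl'
  ext x y
  change restr a (i + 1) (J i e r s) x y ↔ _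
  rw [restr_iff, J_iff]
  grind

theorem J_restr_right {r s : Setoid ℕ} (hi : i < e)
    (hs : T p (i + 1) e s) : restr (i + 1) e (J i e r s) = s := by
  have rs := hs.supp
  have r0 := s.refl'
  ext x y
  change restr (i + 1) e (J i e r s) x y ↔ _
  rw [restr_iff, J_iff]
  grind

theorem J_mono {r s r' s' : Setoid ℕ} (h : r ≤ r') (h' : s ≤ s') : J i e r s ≤ J i e r' s' := by
  intro x y hxy
  change J i e r s x y at hxy
  change J i e r' s' x y
  rw [J_iff] at *
  rcases hxy with ⟨h1, h2, h3⟩ | ⟨h1, h2, h3⟩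
  · exact Or.inl ⟨h1, h2, h h3⟩
  · exact Or.inr ⟨h1, h2, h' h3⟩

theorem J_rk {r s : Setoid ℕ} (hi : i < e)
    (hr : T p a (i + 1) r) (hs : T p (i + 1) e s) : rk (J i e r s) = rk r + rk s + 1 := by
  have rs := hr.supp
  have ss := hs.supp
  have r0 := r.refl' i
  have key : desc (J i e r s) = insert i (desc r ∪ desc s) := by
    ext x
    constructor
    · rintro ⟨y, hxy, h⟩
      rw [J_iff] at h
      simp only [Set.mem_insert_iff, Set.mem_union]
      by_cases hx : x = i
      · exact Or.inl hx
      right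
      rcases h with ⟨h1, h2, h3⟩ | ⟨h1, h2, h3⟩
      · left
        have hxe : x ≠ e := by grind
        rw [if_neg hxe] at h1 h3
        exact ⟨_, by grind, h3⟩
      · right
        have hxe : x ≠ e := by grind
        have hye : y ≠ e := by grind
        rw [if_neg hxe, if_neg hye] at h3
        exact ⟨_, hxy, h3⟩
    · rintro (rfl | ⟨y, hxy, h⟩ | ⟨y, hxy, h⟩)
      · exact ⟨e, hi, by rw [J_iff]; grind⟩
      · exact ⟨y, hxy, by rw [J_iff]; grind⟩
      · exact ⟨y, hxy, by rw [J_iff]; grind⟩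
  unfold rk
  have d1 := hr.desc_subset
  have d2 := hs.desc_subset
  rw [key, Set.ncard_insert_of_notMem _ (hr.desc_finite.union hs.desc_finite),
    Set.ncard_union_eq _ hr.desc_finite hs.desc_finite]
  · rw [Set.disjoint_left]
    intro x h1 h2
    have := d1 h1
    have := d2 h2
    simp only [Set.mem_ofPred_eq] at *
    omega
  · rintro (h | h)
    · have := d1 h
      simp only [Set.mem_ofPred_eq] at *
      omega
    · have := d2 h
      simp only [Set.mem_ofPred_eq] at *
      omega

theorem J_surj {u : Setoid ℕ} (hu : T p a (e + 1) u) (ha : a ≤ i) (hi : i < e) (h1 : u i e)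
    (h2 : ∀ k, i < k → k < e → ¬ u k e) :
    J i e (restr a (i + 1) u) (restr (i + 1) e u) = u := by
  have us := hu.supp
  have u0 := u.refl'
  have u1 := @u.symm'
  have u2 := @u.trans'
  have key : ∀ k l, k ≤ i → i < l → l < e → ¬ u k l := by
    intro k l hk hl hle hkl
    rcases hk.eq_or_lt with rfl | hk
    · exact h2 l hl hle (u2 (u1 hkl) h1)
    · exact h2 l hl hle (u2 (u1 hkl) (u2 (hu.nc k i l e hk hl hle hkl h1) h1))
  have h1' := u1 h1
  ext x y
  change J i e _ _ x y ↔ u x y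
  rw [J_iff, restr_iff, restr_iff]
  have e1 : ∀ x, u x e ↔ u x i := fun x => ⟨fun h => u2 h h1', fun h => u2 h h1⟩
  have e2 : ∀ x, u e x ↔ u i x := fun x => ⟨fun h => u2 h1 h, fun h => u2 h1' h⟩
  have k1 := key x y
  have k2 := key y x
  have k3 := key i y
  have k4 := key i x
  have us1 := us x y
  have us2 := us i y
  have us3 := us x i
  have s1 := @u1 x y
  have s2 := @u1 x i
  clear u1 u2 us key
  by_cases hx : x = e <;> by_cases hy : y = e
  · grind
  · simp only [hx, hy, if_true, if_false, e2]
    grind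
  · simp only [hx, hy, if_true, if_false, e1]
    grind
  · simp only [hx, hy, if_false]
    grind

end

theorem T_bot (p a b : ℕ) : T p a b ⊥ := by
  constructor
  · intro x y h
    exact Or.inl h
  · intro i j k l h1 h2 h3 h4 h5
    have h4 : i = k := h4
    omega
  · intro i j k h1 h2 h3 h4
    have h4 : i = k := h4
    omega

theorem T_eq_bot {p a b : ℕ} (h : b ≤ a + 1) {r : Setoid ℕ} (hr : T p a b r) : r = ⊥ := by
  ext x y
  constructor
  · intro hxy
    have := hr.supp x y hxy
    change x = y
    omega
  · intro hxy
    have hxy : x = y := hxy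
    subst hxy
    exact r.refl' x

theorem rk_bot : rk ⊥ = 0 := by
  have : desc ⊥ = ∅ := by
    ext x
    simp only [desc, Set.mem_ofPred_eq, Set.mem_empty_iff_false, iff_false]
    rintro ⟨y, h1, h2⟩
    have h2 : x = y := h2
    omega
  simp [rk, this]

theorem T.mono {p a b b' : ℕ} (h : b ≤ b') {r : Setoid ℕ} (hr : T p a b r) : T p a b' r :=
  ⟨fun x y hxy => by have := hr.supp x y hxy; omega, hr.nc, hr.line⟩

theorem bool_SCD : HasSCD (fun x y : Bool => x = false ∧ y = true) (fun x => if x then 1 else 0)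
    Set.univ 1 := by
  refine ⟨{[false, true]}, ?_, ?_⟩
  · rintro l rfl
    exact ⟨by simp, by simp, by simp, by simp⟩
  · intro x _
    refine ⟨[false, true], by simp, ?_⟩
    rintro l ⟨rfl, _⟩
    rfl

def Cl (e : ℕ) (u : Setoid ℕ) (k : ℕ) : Prop := k < e ∧ u k e ∧ ∀ k', k < k' → k' < e → ¬ u k' e

theorem Cl.unique {e : ℕ} {u : Setoid ℕ} {k k' : ℕ} (h : Cl e u k) (h' : Cl e u k') : k = k' := by
  by_contra hne
  rcases lt_or_gt_of_ne hne with hl | hl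
  · exact h.2.2 _ hl h'.1 h'.2.1
  · exact h'.2.2 _ hl h.1 h.2.1

theorem J_Cl {p a i e : ℕ} {r s : Setoid ℕ} (hi : i < e)
    (hr : T p a (i + 1) r) (_hs : T p (i + 1) e s) : Cl e (J i e r s) i := by
  have := hr.supp
  have := r.refl' i
  refine ⟨hi, ?_, ?_⟩
  · rw [J_iff]; grind
  · intro k h1 h2 h3
    rw [J_iff] at h3
    grind

theorem pair_SCD {p a i e : ℕ} {h h' : ℕ} (ha : a ≤ i) (hi : i < e)
    (h1 : HasSCD Step rk {r | T p a (i + 1) r} h) (h2 : HasSCD Step rk {r | T p (i + 1) e r} h') :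
    HasSCD Step rk ((fun z : Setoid ℕ × Setoid ℕ => J i e z.1 z.2) ''
      ({r | T p a (i + 1) r} ×ˢ {r | T p (i + 1) e r})) (h + h' + 2 * 1) := by
  refine HasSCD.image _ 1 ?_ ?_ ?_ (HasSCD.prod (fun x y h => h.2) (fun x y h => h.2) h1 h2)
  · rintro ⟨r, s⟩ ⟨hr, hs⟩ ⟨r', s'⟩ ⟨hr', hs'⟩ heq
    simp only at heq
    have e1 : r = r' := by
      rw [← J_restr_left (r := r) (s := s) ha hi hr, heq, J_restr_left ha hi hr']
    have e2 : s = s' := by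
      rw [← J_restr_right (r := r) (s := s) hi hs, heq, J_restr_right hi hs']
    rw [e1, e2]
  · rintro ⟨r, s⟩ ⟨hr, hs⟩ ⟨r', s'⟩ ⟨hr', hs'⟩ hst
    simp only at hr hr' hs hs'
    refine ⟨?_, ?_⟩
    · rcases hst with ⟨k1, k2⟩ | ⟨k1, k2⟩
      · exact J_mono k1.1 (le_of_eq k2)
      · exact J_mono (le_of_eq k1) k2.1
    · simp only
      rw [J_rk hi hr hs, J_rk hi hr' hs']
      rcases hst with ⟨k1, k2⟩ | ⟨k1, k2⟩
      · have := k1.2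
        simp only at this k2
        subst k2
        omega
      · have := k2.2
        simp only at this k1
        subst k1
        omega
  · rintro ⟨r, s⟩ ⟨hr, hs⟩
    exact J_rk hi hr hs

theorem double_SCD {p a f : ℕ} {h : ℕ} (ha : a ≤ f)
    (h1 : HasSCD Step rk {r | T p a (f + 1) r} h) :
    HasSCD Step rk ((fun z : Setoid ℕ × Bool => if z.2 then J f (f + 1) z.1 ⊥ else z.1) ''
      ({r | T p a (f + 1) r} ×ˢ Set.univ)) (h + 1 + 2 * 0) := by
  have hrk : ∀ r, T p a (f + 1) r → rk (J f (f + 1) r ⊥) = rk r + 1 := by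
    intro r hr
    rw [J_rk (Nat.lt_succ_self f) hr (T_bot p (f + 1) (f + 1)), rk_bot]
  have hne : ∀ r s, T p a (f + 1) r → T p a (f + 1) s → J f (f + 1) r ⊥ ≠ s := by
    intro r s hr hs heq
    have := (J_Cl (Nat.lt_succ_self f) hr (T_bot p (f + 1) (f + 1))).2.1
    rw [heq] at this
    have := hs.supp _ _ this
    omega
  refine HasSCD.image _ 0 ?_ ?_ ?_ (HasSCD.prod (fun x y h => h.2) ?_ h1 bool_SCD)
  · rintro ⟨r, b⟩ ⟨hr, -⟩ ⟨r', b'⟩ ⟨hr', -⟩ heq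
    simp only at hr hr'
    cases b <;> cases b' <;> simp only [if_true, if_false, Bool.false_eq_true] at heq
    · rw [heq]
    · exact absurd heq.symm (hne _ _ hr' hr)
    · exact absurd heq (hne _ _ hr hr')
    · rw [← J_restr_left (s := ⊥) ha (Nat.lt_succ_self f) hr, heq,
        J_restr_left ha (Nat.lt_succ_self f) hr']
  · rintro ⟨r, b⟩ ⟨hr, -⟩ ⟨r', b'⟩ ⟨hr', -⟩ hst
    simp only at hr hr'
    rcases hst with ⟨k1, k2⟩ | ⟨k1, k2, k3⟩
    · simp only at k1 k2
      subst k2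
      cases b
      · simpa using k1
      · simp only [if_true]
        refine ⟨J_mono k1.1 le_rfl, ?_⟩
        rw [hrk _ hr, hrk _ hr', k1.2]
    · simp only at k1 k2 k3
      subst k1 k2 k3
      simp only [if_true, if_false, Bool.false_eq_true]
      refine ⟨?_, hrk _ hr⟩
      intro x y hxy
      have := hr.supp x y hxy
      have h0 := r.refl'
      have h1 := (⊥ : Setoid ℕ).refl'
      change J f (f + 1) r ⊥ x y
      change r x y at hxy
      rw [J_iff]
      grind
  · rintro ⟨r, b⟩ ⟨hr, -⟩
    simp only at hr
    cases b
    · simp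
    · simp [hrk _ hr]
  · rintro x y ⟨rfl, rfl⟩
    rfl

theorem T_SCD (p : ℕ) : ∀ n a b, b - a = n → HasSCD Step rk {r | T p a b r} (b - a - 1) := by
  intro n
  induction n using Nat.strong_induction_on with
  | _ n ih =>
  intro a b hn
  rcases Nat.lt_or_ge (a + 1) b with hab | hab
  swap
  · refine ⟨{[⊥]}, ?_, ?_⟩
    · rintro l rfl
      refine ⟨?_, by simp, by simp, ?_⟩
      · intro x hx
        rw [List.mem_singleton.1 hx]
        exact T_bot p a b
      · simp only [List.head_cons, List.getLast_singleton, rk_bot]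
        omega
    · intro x hx
      refine ⟨[⊥], ⟨rfl, by simpa using T_eq_bot hab hx⟩, ?_⟩
      rintro l ⟨rfl, _⟩
      rfl
  obtain ⟨f, rfl⟩ : ∃ f, b = f + 2 := ⟨b - 2, by omega⟩
  have hlt := Nat.lt_succ_self f
  let S : Option ℕ → Set (Setoid ℕ) := fun o => match o with
    | none => (fun z : Setoid ℕ × Bool => if z.2 then J f (f + 1) z.1 ⊥ else z.1) ''
      ({r | T p a (f + 1) r} ×ˢ Set.univ)
    | some i => {u | a ≤ i ∧ i < f ∧ p ≤ f + 1 ∧ u ∈ (fun z : Setoid ℕ × Setoid ℕ => J i (f + 1) z.1 z.2) ''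
      ({r | T p a (i + 1) r} ×ˢ {r | T p (i + 1) (f + 1) r})}
  have hsome : ∀ i u, u ∈ S (some i) → i < f ∧ Cl (f + 1) u i := by
    rintro i _ ⟨h1, h2, h3, ⟨r, s⟩, ⟨hr, hs⟩, rfl⟩
    exact ⟨h2, J_Cl (by omega) hr hs⟩
  have hnone : ∀ i u, u ∈ S none → Cl (f + 1) u i → i = f := by
    rintro i _ ⟨⟨r, b⟩, ⟨hr, -⟩, rfl⟩ hcl
    cases b
    · simp only [if_false, Bool.false_eq_true] at hcl hr
      have := hcl.1
      have := hr.supp _ _ hcl.2.1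
      omega
    · simp only [if_true] at hcl hr
      exact hcl.unique (J_Cl hlt hr (T_bot p (f + 1) (f + 1)))
  have hU : {r | T p a (f + 2) r} = ⋃ o, S o := by
    ext u
    rw [Set.mem_iUnion]
    constructor
    · intro hu
      have hu : T p a (f + 2) u := hu
      by_cases hex : ∃ k, k < f + 1 ∧ u k (f + 1)
      · obtain ⟨k0, hk0⟩ := hex
        have hcl : ∃ k, Cl (f + 1) u k := by
          classical
          have := Nat.findGreatest_spec (P := fun k => k < f + 1 ∧ u k (f + 1)) (n := f + 1) (by omega) hk0
          refine ⟨_, this.1, this.2, ?_⟩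
          intro k' h1 h2 h3
          exact Nat.findGreatest_is_greatest h1 h2.le ⟨h2, h3⟩
        obtain ⟨k, hk1, hk2, hk3⟩ := hcl
        have hak : a ≤ k := by
          have := hu.supp _ _ hk2
          omega
        have hJ := J_surj hu hak hk1 hk2 hk3
        rcases Nat.lt_or_ge k f with hkf | hkf
        · refine ⟨some k, hak, hkf, ?_, (restr a (k + 1) u, restr (k + 1) (f + 1) u),
            ⟨hu.restr, hu.restr⟩, hJ⟩
          by_contra hp
          exact hk3 f hkf hlt (u.trans' (u.symm' (hu.line k f (f + 1) hkf hlt (by omega) hk2)) hk2)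
        · obtain rfl : k = f := by omega
          refine ⟨none, (restr a (k + 1) u, true), ⟨hu.restr, trivial⟩, ?_⟩
          simp only [if_true]
          rw [← T_eq_bot (by omega) (hu.restr : T p (k + 1) (k + 1) (restr (k + 1) (k + 1) u))]
          exact hJ
      · refine ⟨none, (u, false), ⟨⟨?_, hu.nc, hu.line⟩, trivial⟩, rfl⟩
        intro x y hxy
        rcases hu.supp x y hxy with h | h
        · exact Or.inl h
        · by_contra hcon
          have : (x = f + 1 ∧ y < f + 1) ∨ (y = f + 1 ∧ x < f + 1) := by omega
          rcases this with ⟨rfl, h'⟩ | ⟨rfl, h'⟩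
          · exact hex ⟨y, h', u.symm' hxy⟩
          · exact hex ⟨x, h', hxy⟩
    · rintro ⟨o, ho⟩
      cases o with
      | none =>
        obtain ⟨⟨r, b⟩, ⟨hr, -⟩, rfl⟩ := ho
        cases b
        · exact T.mono (by omega) hr
        · exact J_T (by omega) hlt (Or.inr rfl) hr (T_bot p (f + 1) (f + 1))
      | some i =>
        obtain ⟨h1, h2, h3, ⟨r, s⟩, ⟨hr, hs⟩, rfl⟩ := ho
        exact J_T h1 (by omega) (Or.inl h3) hr hs
  rw [hU]
  refine HasSCD.iUnion S ?_ ?_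
  · intro i j u hi hj
    cases i with
    | none =>
      cases j with
      | none => rfl
      | some j =>
        have := hsome j u hj
        have := hnone j u hi this.2
        omega
    | some i =>
      cases j with
      | none =>
        have := hsome i u hi
        have := hnone i u hj this.2
        omega
      | some j => rw [(hsome i u hi).2.unique (hsome j u hj).2]
  · intro o
    cases o with
    | none =>
      have := double_SCD (p := p) (a := a) (f := f) (by omega) (ih _ (by omega) a (f + 1) rfl)
      convert this using 1
      omega
    | some i =>
      by_cases hc : a ≤ i ∧ i < f ∧ p ≤ f + 1
      · have := pair_SCD (p := p) (a := a) (i := i) (e := f + 1) (by omega) (by omega)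
          (ih _ (by omega) a (i + 1) rfl) (ih _ (by omega) (i + 1) (f + 1) rfl)
        convert this using 1
        · ext u
          simp only [S, Set.mem_ofPred_eq]
          tauto
        · omega
      · refine HasSCD.empty ?_
        rintro u ⟨h1, h2, h3, -⟩
        exact hc ⟨h1, h2, h3⟩

def D (a b c : ℂ) : ℝ := (b.re - a.re) * (c.im - a.im) - (b.im - a.im) * (c.re - a.re)

theorem convex_lin_le (α β γ : ℝ) : Convex ℝ {z : ℂ | γ ≤ α * z.re + β * z.im} := by
  intro x hx y hy s t hs ht hst
  simp only [Set.mem_ofPred_eq] at *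
  simp only [Complex.add_re, Complex.add_im, Complex.real_smul, Complex.re_ofReal_mul,
    Complex.im_ofReal_mul]
  have h1 := mul_le_mul_of_nonneg_left hx hs
  have h2 := mul_le_mul_of_nonneg_left hy ht
  have h3 : γ = s * γ + t * γ := by rw [← add_mul, hst, one_mul]
  nlinarith

theorem convex_lin_lt (α β γ : ℝ) : Convex ℝ {z : ℂ | α * z.re + β * z.im < γ} := by
  intro x hx y hy s t hs ht hst
  simp only [Set.mem_ofPred_eq] at *
  simp only [Complex.add_re, Complex.add_im, Complex.real_smul, Complex.re_ofReal_mul,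
    Complex.im_ofReal_mul]
  have h3 : γ = s * γ + t * γ := by rw [← add_mul, hst, one_mul]
  rcases hs.eq_or_lt with rfl | hs
  · have : t = 1 := by linarith
    subst this
    nlinarith
  · have h1 := mul_lt_mul_of_pos_left hx hs
    have h2 := mul_le_mul_of_nonneg_left hy.le ht
    nlinarith

theorem sep_lin {A B : Set ℂ} (α β γ : ℝ) (hA : ∀ z ∈ A, γ ≤ α * z.re + β * z.im)
    (hB : ∀ z ∈ B, α * z.re + β * z.im < γ) : Disjoint (convexHull ℝ A) (convexHull ℝ B) := by
  rw [Set.disjoint_left]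
  intro z h1 h2
  have h1' := convexHull_min (t := {z : ℂ | γ ≤ α * z.re + β * z.im}) hA (convex_lin_le α β γ) h1
  have h2' := convexHull_min (t := {z : ℂ | α * z.re + β * z.im < γ}) hB (convex_lin_lt α β γ) h2
  simp only [Set.mem_ofPred_eq] at *
  linarith

theorem sep_D {A B : Set ℂ} (a b : ℂ) (hA : ∀ z ∈ A, 0 ≤ D a b z)
    (hB : ∀ z ∈ B, D a b z < 0) : Disjoint (convexHull ℝ A) (convexHull ℝ B) := by
  refine sep_lin (-(b.im - a.im)) (b.re - a.re)
    ((b.re - a.re) * a.im - (b.im - a.im) * a.re) ?_ ?_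
  · intro z hz
    have := hA z hz
    unfold D at this
    linarith
  · intro z hz
    have := hB z hz
    unfold D at this
    linarith

theorem D_swap (a b z : ℂ) : D b a z = - D a b z := by unfold D; ring
theorem D_rot (a b z : ℂ) : D a b z = D z a b := by unfold D; ring
theorem D_left (a b : ℂ) : D a b a = 0 := by unfold D; ring
theorem D_right (a b : ℂ) : D a b b = 0 := by unfold D; ring

structure Conf (p N : ℕ) (P : ℕ → ℂ) : Prop where
  hp : 2 ≤ p
  hpN : p ≤ N
  im0 : ∀ k < p, (P k).im = 0
  re_lt : ∀ i j, i < j → j < p → (P i).re < (P j).re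
  pos : ∀ i j k, i < j → j < k → k < N → p ≤ k → 0 < D (P i) (P j) (P k)
  ball : ∀ k < N, (P k).re ^ 2 + (P k).im ^ 2 ≤ 1
  sph : ∀ k < N, p ≤ k → (P k).re ^ 2 + (P k).im ^ 2 = 1

namespace Conf
variable {p N : ℕ} {P : ℕ → ℂ}

theorem nonneg (c : Conf p N P) (i j k : ℕ) (h1 : i < j) (h2 : j < k) (h3 : k < N) :
    0 ≤ D (P i) (P j) (P k) := by
  rcases Nat.lt_or_ge k p with h | h
  · unfold D
    rw [c.im0 i (by omega), c.im0 j (by omega), c.im0 k (by omega)]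
    simp
  · exact (c.pos i j k h1 h2 h3 h).le

theorem ne (c : Conf p N P) (i j : ℕ) (h1 : i < j) (h3 : j < N) : P i ≠ P j := by
  intro heq
  rcases Nat.lt_or_ge j p with h | h
  · have := c.re_lt i j h1 h
    rw [heq] at this
    exact lt_irrefl _ this
  · have hp := c.hp
    rcases Nat.eq_zero_or_pos i with h0 | h0
    · have := c.pos i 1 j (by omega) (by omega) h3 h
      rw [heq, D_left] at this
      exact lt_irrefl _ this
    · have := c.pos 0 i j (by omega) (by omega) h3 h
      rw [heq, D_right] at this
      exact lt_irrefl _ this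

theorem inj (c : Conf p N P) (i j : ℕ) (h1 : i < N) (h3 : j < N) (h : P i = P j) : i = j := by
  by_contra hne
  rcases lt_or_gt_of_ne hne with hl | hl
  · exact c.ne i j hl h3 h
  · exact c.ne j i hl h1 h.symm

theorem disj_aux (c : Conf p N P) (A B : Set ℕ) (hA : ∀ x ∈ A, x < N) (hB : ∀ x ∈ B, x < N)
    (hAB : ∀ x ∈ A, x ∉ B)
    (nc : ∀ i j k l, i < j → j < k → k < l → i ∈ A → j ∈ B → k ∈ A → l ∈ B → False)
    (line : ∀ i j k, i < j → j < k → k < p → i ∈ A → j ∈ B → k ∈ A → False)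
    (a0 b0 : ℕ) (ha0 : a0 ∈ A) (hb0 : b0 ∈ B) (hb0' : ∀ b ∈ B, b0 ≤ b) (h0 : a0 < b0) :
    Disjoint (convexHull ℝ (P '' A)) (convexHull ℝ (P '' B)) := by
  classical
  by_cases hex : ∃ a', a' ∈ A ∧ b0 < a'
  · obtain ⟨a', ⟨ha', hb'⟩, hmin⟩ : ∃ a', (a' ∈ A ∧ b0 < a') ∧ ∀ z, z ∈ A ∧ b0 < z → a' ≤ z :=
      ⟨Nat.find hex, Nat.find_spec hex, fun z hz => Nat.find_min' hex hz⟩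
    obtain ⟨a, ⟨haA, hab⟩, hmax⟩ : ∃ a, (a ∈ A ∧ a < b0) ∧ ∀ z, z ∈ A ∧ z < b0 → z ≤ a := by
      refine ⟨_, Nat.findGreatest_spec (P := fun a => a ∈ A ∧ a < b0) (n := b0) h0.le ⟨ha0, h0⟩, ?_⟩
      intro z hz
      exact Nat.le_findGreatest hz.2.le hz
    have ha'N := hA a' ha'
    have hpa' : p ≤ a' := by
      by_contra hlt
      exact line a b0 a' hab hb' (by omega) haA hb0 ha'
    refine sep_D (P a) (P a') ?_ ?_
    · rintro _ ⟨z, hz, rfl⟩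
      have hzN := hA z hz
      have hzb : z ≠ b0 := fun h => hAB z hz (h ▸ hb0)
      rcases lt_or_gt_of_ne hzb with h | h
      · rcases (hmax z ⟨hz, h⟩).eq_or_lt with rfl | h'
        · rw [D_left]
        · rw [D_rot]
          exact c.nonneg z a a' h' (by omega) ha'N
      · rcases (hmin z ⟨hz, h⟩).eq_or_lt with rfl | h'
        · rw [D_right]
        · exact c.nonneg a a' z (by omega) h' hzN
    · rintro _ ⟨z, hz, rfl⟩
      have h1 := hb0' z hz
      have h2 : z < a' := by
        by_contra hlt
        have : z ≠ a' := fun h => hAB a' ha' (h ▸ hz)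
        exact nc a b0 a' z hab hb' (by omega) haA hb0 ha' hz
      have := c.pos a z a' (by omega) h2 ha'N hpa'
      rw [D_rot, D_swap] at this
      linarith
  · push Not at hex
    have hAlt : ∀ a ∈ A, a < b0 := fun a ha =>
      lt_of_le_of_ne (hex a ha) fun h => hAB a ha (h ▸ hb0)
    obtain ⟨b1, hb1, hmax⟩ : ∃ b1, b1 ∈ B ∧ ∀ z, z ∈ B → z ≤ b1 := by
      refine ⟨_, Nat.findGreatest_spec (P := fun a => a ∈ B) (n := N) (hB b0 hb0).le hb0, ?_⟩
      intro z hz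
      exact Nat.le_findGreatest (hB z hz).le hz
    have hb1N := hB b1 hb1
    have hb01 := hb0' b1 hb1
    rcases Nat.lt_or_ge b1 p with hp1 | hp1
    · refine (sep_lin 1 0 (P b0).re ?_ ?_).symm
      · rintro _ ⟨z, hz, rfl⟩
        rcases (hb0' z hz).eq_or_lt with rfl | h
        · simp
        · have := c.re_lt b0 z h (lt_of_le_of_lt (hmax z hz) hp1)
          linarith
      · rintro _ ⟨z, hz, rfl⟩
        have := c.re_lt z b0 (hAlt z hz) (by omega)
        linarith
    · rcases hb01.eq_or_lt with rfl | hlt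
      · have hs := c.sph b0 hb1N hp1
        refine (sep_lin (P b0).re (P b0).im 1 ?_ ?_).symm
        · rintro _ ⟨z, hz, rfl⟩
          obtain rfl : z = b0 := le_antisymm (hmax z hz) (hb0' z hz)
          nlinarith
        · rintro _ ⟨z, hz, rfl⟩
          have hz2 := c.ball z (hA z hz)
          have hne := c.ne z b0 (hAlt z hz) hb1N
          by_contra hcon
          push Not at hcon
          have hsum : ((P z).re - (P b0).re) ^ 2 + ((P z).im - (P b0).im) ^ 2 ≤ 0 := by
            nlinarith
          have e1 : (P z).re - (P b0).re = 0 := by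
            apply pow_eq_zero_iff (two_ne_zero) |>.1
            nlinarith [sq_nonneg ((P z).re - (P b0).re), sq_nonneg ((P z).im - (P b0).im)]
          have e2 : (P z).im - (P b0).im = 0 := by
            apply pow_eq_zero_iff (two_ne_zero) |>.1
            nlinarith [sq_nonneg ((P z).re - (P b0).re), sq_nonneg ((P z).im - (P b0).im)]
          exact hne (Complex.ext (by linarith) (by linarith))
      · refine (sep_D (P b1) (P b0) ?_ ?_).symm
        · rintro _ ⟨z, hz, rfl⟩
          rcases (hb0' z hz).eq_or_lt with rfl | h
          · rw [D_right]
          · rcases (hmax z hz).eq_or_lt with rfl | h'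
            · rw [D_left]
            · have := c.nonneg b0 z b1 h h' hb1N
              rw [D_rot] at this
              exact this
        · rintro _ ⟨z, hz, rfl⟩
          have := c.pos z b0 b1 (hAlt z hz) hlt hb1N hp1
          rw [D_rot, D_rot, D_swap] at this
          linarith

theorem disj (c : Conf p N P) (A B : Set ℕ) (hA : ∀ x ∈ A, x < N) (hB : ∀ x ∈ B, x < N)
    (hAB : ∀ x ∈ A, x ∉ B)
    (nc : ∀ i j k l, i < j → j < k → k < l → i ∈ A → j ∈ B → k ∈ A → l ∈ B → False)
    (nc' : ∀ i j k l, i < j → j < k → k < l → i ∈ B → j ∈ A → k ∈ B → l ∈ A → False)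
    (line : ∀ i j k, i < j → j < k → k < p → i ∈ A → j ∈ B → k ∈ A → False)
    (line' : ∀ i j k, i < j → j < k → k < p → i ∈ B → j ∈ A → k ∈ B → False)
    (neA : ∃ x, x ∈ A) (neB : ∃ x, x ∈ B) :
    Disjoint (convexHull ℝ (P '' A)) (convexHull ℝ (P '' B)) := by
  classical
  have hA1 := Nat.find_spec neA
  have hB1 := Nat.find_spec neB
  have hne : Nat.find neA ≠ Nat.find neB := fun h => hAB _ hA1 (h ▸ hB1)
  rcases lt_or_gt_of_ne hne with h | h
  · exact c.disj_aux A B hA hB hAB nc line _ _ hA1 hB1 (fun b hb => Nat.find_min' _ hb) h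
  · exact (c.disj_aux B A hB hA (fun x h1 h2 => hAB x h2 h1) nc' line' _ _ hB1 hA1
      (fun b hb => Nat.find_min' _ hb) h).symm

theorem mem_seg (c : Conf p N P) (i j k : ℕ) (h1 : i < j) (h2 : j < k) (h3 : k < p) :
    P j ∈ segment ℝ (P i) (P k) := by
  have e1 := c.re_lt i j h1 (by omega)
  have e2 := c.re_lt j k h2 h3
  have hpos : 0 < (P k).re - (P i).re := by linarith
  refine ⟨((P k).re - (P j).re) / ((P k).re - (P i).re),
    ((P j).re - (P i).re) / ((P k).re - (P i).re), ?_, ?_, ?_, ?_⟩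
  · exact div_nonneg (by linarith) hpos.le
  · exact div_nonneg (by linarith) hpos.le
  · field_simp
    ring
  · apply Complex.ext
    · simp only [Complex.add_re, Complex.real_smul, Complex.re_ofReal_mul]
      field_simp
      ring
    · simp only [Complex.add_im, Complex.real_smul, Complex.im_ofReal_mul]
      rw [c.im0 i (by omega), c.im0 j (by omega), c.im0 k (by omega)]
      simp

theorem cross (c : Conf p N P) (i j k l : ℕ) (h1 : i < j) (h2 : j < k) (h3 : k < l) (h4 : l < N) :
    ∃ z, z ∈ segment ℝ (P i) (P k) ∧ z ∈ segment ℝ (P j) (P l) := by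
  rcases Nat.lt_or_ge l p with h | h
  · exact ⟨P j, c.mem_seg i j k h1 h2 (by omega), left_mem_segment ℝ _ _⟩
  · have d1 := c.pos j k l h2 h3 h4 h
    have d2 := c.pos i k l (by omega) h3 h4 h
    have d3 := c.pos i j l h1 (by omega) h4 h
    have d4 := c.nonneg i j k h1 h2 (by omega)
    set w := D (P j) (P k) (P l) + D (P i) (P j) (P l) with hw
    have hw' : w = D (P i) (P k) (P l) + D (P i) (P j) (P k) := by
      rw [hw]; unfold D; ring
    have hw0 : 0 < w := by positivity
    refine ⟨((D (P j) (P k) (P l) / w : ℝ)) • P i + ((D (P i) (P j) (P l) / w : ℝ)) • P k,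
      ⟨_, _, by positivity, by positivity, ?_, rfl⟩,
      ⟨D (P i) (P k) (P l) / w, D (P i) (P j) (P k) / w, by positivity, by positivity, ?_, ?_⟩⟩
    · rw [← add_div, ← hw, div_self hw0.ne']
    · rw [← add_div, ← hw', div_self hw0.ne']
    · apply Complex.ext
      · simp only [Complex.add_re, Complex.real_smul, Complex.re_ofReal_mul]
        field_simp
        unfold D
        ring
      · simp only [Complex.add_im, Complex.real_smul, Complex.im_ofReal_mul]
        field_simp
        unfold D
        ring

end Conf

theorem SameBlock.symm {S : Finset ℂ} {π : NC S} {a b : ℂ} (h : π.SameBlock a b) :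
    π.SameBlock b a := by
  obtain ⟨B, hB, h1, h2⟩ := h
  exact ⟨B, hB, h2, h1⟩

theorem SameBlock.trans {S : Finset ℂ} {π : NC S} {a b c : ℂ} (h : π.SameBlock a b)
    (h' : π.SameBlock b c) : π.SameBlock a c := by
  obtain ⟨B, hB, h1, h2⟩ := h
  obtain ⟨B', hB', h1', h2'⟩ := h'
  obtain rfl := π.1.eq_of_mem_parts hB hB' h2 h1'
  exact ⟨B, hB, h1, h2'⟩

def G (N : ℕ) (P : ℕ → ℂ) {S : Finset ℂ} (π : NC S) : Setoid ℕ where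
  r x y := x = y ∨ (x < N ∧ y < N ∧ π.SameBlock (P x) (P y))
  iseqv := by
    refine ⟨fun x => Or.inl rfl, fun {x y} h => ?_, fun {x y z} h h' => ?_⟩
    · rcases h with rfl | ⟨h1, h2, h3⟩
      · exact Or.inl rfl
      · exact Or.inr ⟨h2, h1, SameBlock.symm h3⟩
    · rcases h with rfl | ⟨h1, h2, h3⟩
      · exact h'
      · rcases h' with rfl | ⟨k1, k2, k3⟩
        · exact Or.inr ⟨h1, h2, h3⟩
        · exact Or.inr ⟨h1, k2, SameBlock.trans h3 k3⟩

theorem G_iff (N : ℕ) (P : ℕ → ℂ) {S : Finset ℂ} (π : NC S) (x y : ℕ) :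
    G N P π x y ↔ x = y ∨ (x < N ∧ y < N ∧ π.SameBlock (P x) (P y)) := Iff.rfl

section
variable {p N : ℕ} {P : ℕ → ℂ} {S : Finset ℂ}

theorem G_lt
    (hS : ∀ z, z ∈ S ↔ ∃ k < N, P k = z) (π : NC S) {x y : ℕ} (hx : x < N) (hy : y < N) :
    G N P π x y ↔ π.SameBlock (P x) (P y) := by
  rw [G_iff]
  constructor
  · rintro (rfl | h)
    · obtain ⟨B, hB, h⟩ := π.1.exists_mem ((hS _).2 ⟨x, hx, rfl⟩)
      exact ⟨B, hB, h, h⟩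
    · exact h.2.2
  · intro h
    exact Or.inr ⟨hx, hy, h⟩

theorem G_T (c : Conf p N P)
    (hS : ∀ z, z ∈ S ↔ ∃ k < N, P k = z) (π : NC S) : T p 0 N (G N P π) := by
  have hmeet : ∀ x y x' y' z, x < N → y < N → x' < N → y' < N → G N P π x y → G N P π x' y' →
      z ∈ segment ℝ (P x) (P y) → z ∈ segment ℝ (P x') (P y') → G N P π x x' := by
    intro x y x' y' z hx hy hx' hy' h h' hz hz'
    rw [G_lt hS π hx hy] at h
    rw [G_lt hS π hx' hy'] at h'
    rw [G_lt hS π hx hx']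
    obtain ⟨B, hB, h1, h2⟩ := h
    obtain ⟨B', hB', h1', h2'⟩ := h'
    have : B = B' := by
      by_contra hne
      have hd := π.2 hB hB' hne
      exact Set.disjoint_left.1 hd (segment_subset_convexHull (s := (B : Set ℂ)) h1 h2 hz)
        (segment_subset_convexHull (s := (B' : Set ℂ)) h1' h2' hz')
    subst this
    exact ⟨B, hB, h1, h1'⟩
  have supp : ∀ x y, G N P π x y → x = y ∨ (0 ≤ x ∧ x < N ∧ 0 ≤ y ∧ y < N) := by
    intro x y h
    rw [G_iff] at h
    omega
  refine ⟨supp, ?_, ?_⟩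
  · intro i j k l h1 h2 h3 h4 h5
    have := supp _ _ h4
    have := supp _ _ h5
    obtain ⟨z, hz, hz'⟩ := c.cross i j k l h1 h2 h3 (by omega)
    exact hmeet i k j l z (by omega) (by omega) (by omega) (by omega) h4 h5 hz hz'
  · intro i j k h1 h2 h3 h4
    have := supp _ _ h4
    exact hmeet i k j j (P j) (by omega) (by omega) (by omega) (by omega) h4
      ((G N P π).refl' j) (c.mem_seg i j k h1 h2 h3) (left_mem_segment ℝ _ _)

theorem G_le
    (hS : ∀ z, z ∈ S ↔ ∃ k < N, P k = z) (π μ : NC S) : G N P π ≤ G N P μ ↔ π ≤ μ := by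
  constructor
  · intro h B hB
    obtain ⟨z, hz⟩ := π.1.nonempty_of_mem_parts hB
    have hzS := π.1.le hB hz
    obtain ⟨C, hC, hzC⟩ := μ.1.exists_mem hzS
    refine ⟨C, hC, ?_⟩
    intro w hw
    obtain ⟨x, hx, rfl⟩ := (hS _).1 hzS
    obtain ⟨y, hy, rfl⟩ := (hS _).1 (π.1.le hB hw)
    have h1 : G N P π x y := (G_lt hS π hx hy).2 ⟨B, hB, hz, hw⟩
    obtain ⟨C', hC', h2, h3⟩ := (G_lt hS μ hx hy).1 (h h1)
    obtain rfl := μ.1.eq_of_mem_parts hC hC' hzC h2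
    exact h3
  · intro h x y hxy
    change G N P μ x y
    change G N P π x y at hxy
    rw [G_iff] at hxy ⊢
    rcases hxy with h1 | ⟨h1, h2, B, hB, h3, h4⟩
    · exact Or.inl h1
    · obtain ⟨C, hC, hBC⟩ := h hB
      exact Or.inr ⟨h1, h2, C, hC, hBC h3, hBC h4⟩

theorem G_inj
    (hS : ∀ z, z ∈ S ↔ ∃ k < N, P k = z) (π μ : NC S) (h : G N P π = G N P μ) : π = μ :=
  le_antisymm ((G_le hS π μ).1 h.le) ((G_le hS μ π).1 h.ge)

theorem G_surj (c : Conf p N P)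
    (hS : ∀ z, z ∈ S ↔ ∃ k < N, P k = z) (r : Setoid ℕ) (hr : T p 0 N r) : ∃ π : NC S, G N P π = r := by
  classical
  let blk : ℕ → Finset ℂ := fun k => ((range N).filter (fun x => r k x)).image P
  have hblk : ∀ k x, x < N → (P x ∈ blk k ↔ r k x) := by
    intro k x hx
    simp only [blk, Finset.mem_image, Finset.mem_filter, Finset.mem_range]
    constructor
    · rintro ⟨y, ⟨hy, hky⟩, e⟩
      obtain rfl := c.inj y x hy hx e
      exact hky
    · intro h
      exact ⟨x, ⟨hx, h⟩, rfl⟩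
  have heq : ∀ k k', r k k' → blk k = blk k' := by
    intro k k' h
    have : ∀ x, r k x ↔ r k' x := fun x => ⟨fun h' => r.trans' (r.symm' h) h', fun h' => r.trans' h h'⟩
    simp only [blk, this]
  let π : Finpartition S := Finpartition.ofExistsUnique ((range N).image blk)
    (by
      intro B hB z hz
      obtain ⟨k, hk, rfl⟩ := Finset.mem_image.1 hB
      obtain ⟨x, hx, rfl⟩ := Finset.mem_image.1 hz
      exact (hS _).2 ⟨x, Finset.mem_range.1 (Finset.mem_filter.1 hx).1, rfl⟩)
    (by
      intro z hz
      obtain ⟨x, hx, rfl⟩ := (hS _).1 hz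
      refine ⟨blk x, ⟨Finset.mem_image_of_mem _ (Finset.mem_range.2 hx), (hblk x x hx).2 (r.refl' x)⟩, ?_⟩
      rintro B ⟨hB, hxB⟩
      obtain ⟨k, hk, rfl⟩ := Finset.mem_image.1 hB
      exact heq _ _ ((hblk k x hx).1 hxB))
    (by
      intro h
      obtain ⟨k, hk, he⟩ := Finset.mem_image.1 h
      have := (hblk k k (Finset.mem_range.1 hk)).2 (r.refl' k)
      rw [he] at this
      simp at this)
  have hparts : π.parts = (range N).image blk := rfl
  have hnc : IsNoncrossing π := by
    intro B hB B' hB' hne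
    rw [hparts] at hB hB'
    obtain ⟨k, hk, rfl⟩ := Finset.mem_image.1 hB
    obtain ⟨k', hk', rfl⟩ := Finset.mem_image.1 hB'
    have hk := Finset.mem_range.1 hk
    have hk' := Finset.mem_range.1 hk'
    have hkk : ¬ r k k' := fun h => hne (heq _ _ h)
    have key : ∀ x y, r k x → r k' y → ¬ r x y := fun x y h1 h2 h3 =>
      hkk (r.trans' h1 (r.trans' h3 (r.symm' h2)))
    have key' : ∀ x y, r k x → r k' y → ¬ r y x := fun x y h1 h2 h3 =>
      key x y h1 h2 (r.symm' h3)
    have e : ∀ k, (blk k : Set ℂ) = P '' {x | x < N ∧ r k x} := by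
      intro k
      simp only [blk, Finset.coe_image, Finset.coe_filter, Finset.mem_range]
    rw [e k, e k']
    refine c.disj _ _ (fun x hx => hx.1) (fun x hx => hx.1) (fun x hx hx' => key x x hx.2 hx'.2 (r.refl' x))
      ?_ ?_ ?_ ?_ ⟨k, hk, r.refl' k⟩ ⟨k', hk', r.refl' k'⟩
    · intro i j k l h1 h2 h3 hi hj hk hl
      exact key i j hi.2 hj.2 (hr.nc i j k l h1 h2 h3 (r.trans' (r.symm' hi.2) hk.2)
        (r.trans' (r.symm' hj.2) hl.2))
    · intro i j k l h1 h2 h3 hi hj hk hl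
      exact key' j i hj.2 hi.2 (hr.nc i j k l h1 h2 h3 (r.trans' (r.symm' hi.2) hk.2)
        (r.trans' (r.symm' hj.2) hl.2))
    · intro i j k h1 h2 h3 hi hj hk
      exact key i j hi.2 hj.2 (hr.line i j k h1 h2 h3 (r.trans' (r.symm' hi.2) hk.2))
    · intro i j k h1 h2 h3 hi hj hk
      exact key' j i hj.2 hi.2 (hr.line i j k h1 h2 h3 (r.trans' (r.symm' hi.2) hk.2))
  refine ⟨⟨π, hnc⟩, ?_⟩
  ext x y
  change G N P ⟨π, hnc⟩ x y ↔ r x y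
  rw [G_iff]
  constructor
  · rintro (rfl | ⟨hx, hy, B, hB, h1, h2⟩)
    · exact r.refl' x
    · have hB : B ∈ (range N).image blk := hB
      obtain ⟨k, hk, rfl⟩ := Finset.mem_image.1 hB
      exact r.trans' (r.symm' ((hblk k x hx).1 h1)) ((hblk k y hy).1 h2)
  · intro h
    rcases hr.supp x y h with h1 | ⟨-, hx, -, hy⟩
    · exact Or.inl h1
    · refine Or.inr ⟨hx, hy, blk x, ?_, (hblk x x hx).2 (r.refl' x), (hblk x y hy).2 h⟩
      exact Finset.mem_image_of_mem _ (Finset.mem_range.2 hx)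

theorem G_card (c : Conf p N P)
    (hS : ∀ z, z ∈ S ↔ ∃ k < N, P k = z) (π : NC S) : rk (G N P π) + π.parts.card = N := by
  classical
  have hT := G_T c hS π
  have hsub : desc (G N P π) ⊆ Set.Iio N := by
    intro x hx
    have := hT.desc_subset hx
    simp only [Set.mem_ofPred_eq] at this
    simp only [Set.mem_Iio]
    omega
  let U := (range N).filter (fun x => x ∈ desc (G N P π))
  let V := (range N).filter (fun x => x ∉ desc (G N P π))
  have h1 : rk (G N P π) = U.card := by
    unfold rk
    rw [← Set.ncard_coe_finset]
    congr 1
    ext x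
    simp only [U, Finset.coe_filter, Finset.mem_range, Set.mem_ofPred_eq]
    exact ⟨fun h => ⟨hsub h, h⟩, fun h => h.2⟩
  have h2 : V.card = π.parts.card := by
    refine Finset.card_bij (fun k _ => π.1.part (P k)) ?_ ?_ ?_
    · intro k hk
      have hk := Finset.mem_range.1 (Finset.mem_filter.1 hk).1
      exact π.1.part_mem.2 ((hS _).2 ⟨k, hk, rfl⟩)
    · intro k hk k' hk' heq
      obtain ⟨hk, hd⟩ := Finset.mem_filter.1 hk
      obtain ⟨hk', hd'⟩ := Finset.mem_filter.1 hk'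
      have hk := Finset.mem_range.1 hk
      have hk' := Finset.mem_range.1 hk'
      have hkS := (hS _).2 ⟨k, hk, rfl⟩
      have hkS' := (hS _).2 ⟨k', hk', rfl⟩
      have hr : G N P π k k' := by
        rw [G_lt hS π hk hk']
        refine ⟨π.1.part (P k), π.1.part_mem.2 hkS, π.1.mem_part hkS, ?_⟩
        rw [heq]
        exact π.1.mem_part hkS'
      by_contra hne
      rcases lt_or_gt_of_ne hne with hl | hl
      · exact hd ⟨k', hl, hr⟩
      · exact hd' ⟨k, hl, (G N P π).symm' hr⟩
    · intro B hB
      obtain ⟨z, hz⟩ := π.1.nonempty_of_mem_parts hB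
      obtain ⟨x, hx, rfl⟩ := (hS _).1 (π.1.le hB hz)
      have hs := Nat.findGreatest_spec (P := fun k => k < N ∧ P k ∈ B) (n := N) hx.le ⟨hx, hz⟩
      set k := Nat.findGreatest (fun k => k < N ∧ P k ∈ B) N with hkdef
      refine ⟨k, ?_, π.1.part_eq_of_mem hB hs.2⟩
      refine Finset.mem_filter.2 ⟨Finset.mem_range.2 hs.1, ?_⟩
      rintro ⟨y, hy, hky⟩
      have hyN : y < N := by
        have := hT.supp _ _ hky
        omega
      obtain ⟨B', hB', h1, h2⟩ := (G_lt hS π hs.1 hyN).1 hky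
      obtain rfl := π.1.eq_of_mem_parts hB hB' hs.2 h1
      exact Nat.findGreatest_is_greatest (P := fun k => k < N ∧ P k ∈ B) hy hyN.le ⟨hyN, h2⟩
  rw [h1, ← h2]
  have := Finset.card_filter_add_card_filter_not (s := range N) (fun x => x ∈ desc (G N P π))
  rw [Finset.card_range] at this
  exact this

theorem card_lt {π μ : NC S} (h : π < μ) : μ.parts.card < π.parts.card := by
  refine lt_of_le_of_ne (Finpartition.card_mono h.le) ?_
  intro hc
  have hle : π.1 ≤ μ.1 := h.le
  have hex : ∀ B ∈ π.1.parts, ∃ C ∈ μ.1.parts, B ≤ C := fun B hB => hle hB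
  choose! f hf1 hf2 using hex
  have hsurj : Set.SurjOn f π.1.parts μ.1.parts := by
    intro C hC
    obtain ⟨z, hz⟩ := μ.1.nonempty_of_mem_parts hC
    obtain ⟨B, hB, hzB⟩ := π.1.exists_mem (μ.1.le hC hz)
    exact ⟨B, hB, μ.1.eq_of_mem_parts (hf1 B hB) hC (hf2 B hB hzB) hz⟩
  have hinj : Set.InjOn f π.1.parts :=
    Finset.injOn_of_surjOn_of_card_le f hf1 hsurj hc.ge
  have hge : μ ≤ π := by
    intro C hC
    obtain ⟨B, hB, rfl⟩ := hsurj hC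
    refine ⟨B, hB, ?_⟩
    intro z hz
    obtain ⟨B', hB', hzB'⟩ := π.1.exists_mem (μ.1.le hC hz)
    have : f B' = f B := μ.1.eq_of_mem_parts (hf1 B' hB') hC (hf2 B' hB' hzB') hz
    rwa [← hinj hB' hB this]
  exact absurd hge (not_le_of_gt h)

theorem G_step (c : Conf p N P)
    (hS : ∀ z, z ∈ S ↔ ∃ k < N, P k = z) {π μ : NC S} (h : Step (G N P π) (G N P μ)) : π ⋖ μ := by
  have h1 := G_card c hS π
  have h2 := G_card c hS μ
  have h3 := h.2
  refine ⟨lt_of_le_of_ne ((G_le hS π μ).1 h.1) ?_, ?_⟩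
  · rintro rfl
    omega
  · intro ν hν hν'
    have := card_lt hν
    have := card_lt hν'
    omega

theorem final (c : Conf p N P)
    (hS : ∀ z, z ∈ S ↔ ∃ k < N, P k = z) : ∃ chains : Set (List (NC S)),
      [] ∉ chains ∧
      (∀ x : NC S, ∃! l, l ∈ chains ∧ x ∈ l) ∧
      (∀ l ∈ chains, List.IsChain (· ⋖ ·) l) ∧
      ∀ l ∈ chains, ∀ h : l ≠ [],
        (N - (l.head h).parts.card) + (N - (l.getLast h).parts.card) = N - 1 := by
  have h0 := T_SCD p N 0 N (by omega)
  obtain ⟨g, hg⟩ : ∃ g : Setoid ℕ → NC S, ∀ r, T p 0 N r → G N P (g r) = r := by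
    have : ∀ r, ∃ π : NC S, T p 0 N r → G N P π = r := by
      intro r
      by_cases hr : T p 0 N r
      · obtain ⟨π, hπ⟩ := G_surj c hS r hr
        exact ⟨π, fun _ => hπ⟩
      · obtain ⟨π, hπ⟩ := G_surj c hS ⊥ (T_bot _ _ _)
        exact ⟨π, fun h => absurd h hr⟩
    choose g hg using this
    exact ⟨g, hg⟩
  have h1 := HasSCD.image (R' := fun π μ => Step (G N P π) (G N P μ))
    (rk' := fun π : NC S => rk (G N P π)) g 0 ?_ ?_ ?_ h0
  · obtain ⟨C, hC1, hC2⟩ := h1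
    refine ⟨C, ?_, ?_, ?_, ?_⟩
    · intro h
      obtain ⟨-, -, hne, -⟩ := hC1 _ h
      exact hne rfl
    · intro x
      refine hC2 x ⟨G N P x, G_T c hS x, ?_⟩
      exact G_inj hS _ _ (hg _ (G_T c hS x))
    · intro l hl
      exact (hC1 l hl).2.1.imp fun a b h => G_step c hS h
    · intro l hl hne
      obtain ⟨-, -, hne', h⟩ := hC1 l hl
      have e1 := G_card c hS (l.head hne)
      have e2 := G_card c hS (l.getLast hne)
      simp only at h
      omega
  · intro r hr s hs h
    rw [← hg r hr, ← hg s hs, h]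
  · intro r hr s hs h
    rw [hg r hr, hg s hs]
    exact h
  · intro r hr
    rw [hg r hr]
    rfl

end

noncomputable def pt (m n k : ℕ) : ℂ := if k < m + 2 then Sx m k else Sy n (k - (m + 1))

noncomputable def circ (θ : ℝ) : ℂ := ⟨Real.cos θ, Real.sin θ⟩

theorem Sx_re (m k : ℕ) : (Sx m k).re = -1 + 2 * ((k : ℝ) / (m + 1)) := by
  have : Sx m k = ((-1 + 2 * ((k : ℝ) / (m + 1)) : ℝ) : ℂ) := by
    unfold Sx
    push_cast
    ring
  rw [this, Complex.ofReal_re]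

theorem Sx_im (m k : ℕ) : (Sx m k).im = 0 := by
  have : Sx m k = ((-1 + 2 * ((k : ℝ) / (m + 1)) : ℝ) : ℂ) := by
    unfold Sx
    push_cast
    ring
  rw [this, Complex.ofReal_im]

theorem Sy_eq (n j : ℕ) : Sy n j = circ (Real.pi * j / (n + 1)) := by
  have : Sy n j = Complex.exp (((Real.pi * j / (n + 1) : ℝ) : ℂ) * Complex.I) := by
    unfold Sy
    push_cast
    rfl
  rw [this]
  apply Complex.ext
  · rw [Complex.exp_ofReal_mul_I_re]; rfl
  · rw [Complex.exp_ofReal_mul_I_im]; rfl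

theorem ang (n j : ℕ) (h1 : 0 < j) (h2 : j ≤ n) :
    0 < Real.pi * j / (n + 1) ∧ Real.pi * j / (n + 1) < Real.pi := by
  have hpi := Real.pi_pos
  have h1' : (0 : ℝ) < j := by exact_mod_cast h1
  have h2' : (j : ℝ) ≤ n := by exact_mod_cast h2
  refine ⟨by positivity, ?_⟩
  rw [div_lt_iff₀ (by positivity)]
  apply mul_lt_mul_of_pos_left _ hpi
  linarith

theorem ang_lt (n i j : ℕ) (h : i < j) : Real.pi * i / (n + 1) < Real.pi * j / (n + 1) := by
  have hpi := Real.pi_pos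
  have h' : (i : ℝ) < j := by exact_mod_cast h
  gcongr

theorem circ_pos (α β γ : ℝ) (h0 : 0 ≤ α) (h1 : α < β) (h2 : β < γ) (h3 : γ ≤ Real.pi) :
    0 < D (circ α) (circ β) (circ γ) := by
  obtain ⟨u, hu⟩ : ∃ u, u = (β - α) / 2 := ⟨_, rfl⟩
  obtain ⟨v, hv⟩ : ∃ v, v = (γ - β) / 2 := ⟨_, rfl⟩
  have e0 : D (circ α) (circ β) (circ γ) =
      Real.sin (β - α) + Real.sin (γ - β) - Real.sin (γ - α) := by
    simp only [D, circ, Real.sin_sub]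
    ring
  have e1 : D (circ α) (circ β) (circ γ) = 4 * Real.sin u * Real.sin v * Real.sin (u + v) := by
    rw [e0, show β - α = 2 * u by linarith, show γ - β = 2 * v by linarith,
      show γ - α = 2 * u + 2 * v by linarith, Real.sin_add, Real.sin_add, Real.sin_two_mul,
      Real.sin_two_mul, Real.cos_two_mul, Real.cos_two_mul, Real.cos_sq', Real.cos_sq']
    ring
  rw [e1]
  have hpi := Real.pi_pos
  have s1 : 0 < Real.sin u := Real.sin_pos_of_pos_of_lt_pi (by linarith) (by linarith)
  have s2 : 0 < Real.sin v := Real.sin_pos_of_pos_of_lt_pi (by linarith) (by linarith)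
  have s3 : 0 < Real.sin (u + v) := Real.sin_pos_of_pos_of_lt_pi (by linarith) (by linarith)
  positivity

theorem conf (m n : ℕ) : Conf (m + 2) (m + n + 2) (pt m n) := by
  have hx : ∀ k, k < m + 2 → pt m n k = Sx m k := fun k hk => if_pos hk
  have hy : ∀ k, m + 2 ≤ k → pt m n k = circ (Real.pi * ((k - (m + 1) : ℕ) : ℝ) / (n + 1)) :=
    fun k hk => by rw [← Sy_eq]; exact if_neg (by omega)
  have hm : (0 : ℝ) < m + 1 := by positivity
  have re_lt : ∀ i j, i < j → j < m + 2 → (pt m n i).re < (pt m n j).re := by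
    intro i j h1 h2
    rw [hx i (by omega), hx j h2, Sx_re, Sx_re]
    have h' : (i : ℝ) < j := by exact_mod_cast h1
    gcongr
  have ht : ∀ k, k < m + 2 → 0 ≤ (k : ℝ) / (m + 1) ∧ (k : ℝ) / (m + 1) ≤ 1 := by
    intro k hk
    refine ⟨by positivity, ?_⟩
    rw [div_le_one hm]
    have : k ≤ m + 1 := by omega
    exact_mod_cast this
  have sph : ∀ k, m + 2 ≤ k → (pt m n k).re ^ 2 + (pt m n k).im ^ 2 = 1 := by
    intro k hk
    rw [hy k hk]
    exact Real.cos_sq_add_sin_sq _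
  refine ⟨by omega, by omega, ?_, re_lt, ?_, ?_, fun k _ hk => sph k hk⟩
  · intro k hk
    rw [hx k hk, Sx_im]
  · intro i j k h1 h2 h3 h4
    have hk := ang n (k - (m + 1)) (by omega) (by omega)
    rcases Nat.lt_or_ge j (m + 2) with hj | hj
    · have hre := re_lt i j h1 hj
      have i0 : (pt m n i).im = 0 := by rw [hx i (by omega), Sx_im]
      have j0 : (pt m n j).im = 0 := by rw [hx j (by omega), Sx_im]
      have k0 : 0 < (pt m n k).im := by
        rw [hy k h4]
        exact Real.sin_pos_of_pos_of_lt_pi hk.1 hk.2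
      unfold D
      rw [i0, j0]
      nlinarith [mul_pos (sub_pos.2 hre) k0]
    · have hjk := ang_lt n (j - (m + 1)) (k - (m + 1)) (by omega)
      have hj' := ang n (j - (m + 1)) (by omega) (by omega)
      rcases Nat.lt_or_ge i (m + 2) with hi | hi
      · obtain ⟨t0, t1⟩ := ht i hi
        rw [hx i hi, hy j hj, hy k h4]
        set t := (i : ℝ) / (m + 1) with htdef
        set B := Real.pi * ((j - (m + 1) : ℕ) : ℝ) / (n + 1) with hB
        set C := Real.pi * ((k - (m + 1) : ℕ) : ℝ) / (n + 1) with hC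
        have d1 := circ_pos 0 B C le_rfl hj'.1 hjk hk.2.le
        have d2 := circ_pos B C Real.pi hj'.1.le hjk hk.2 le_rfl
        rw [D_rot] at d2
        have e : D (Sx m i) (circ B) (circ C) =
            t * D (circ 0) (circ B) (circ C) + (1 - t) * D (circ Real.pi) (circ B) (circ C) := by
          unfold D
          rw [Sx_re, Sx_im]
          simp only [circ, Real.cos_zero, Real.sin_zero, Real.cos_pi, Real.sin_pi, ← htdef]
          ring
        rw [e]
        rcases t0.eq_or_lt with h0 | h0
        · rw [← h0]
          linarith
        · have := mul_pos h0 d1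
          have := mul_nonneg (sub_nonneg.2 t1) d2.le
          linarith
      · have hi' := ang n (i - (m + 1)) (by omega) (by omega)
        rw [hy i hi, hy j hj, hy k h4]
        exact circ_pos _ _ _ hi'.1.le (ang_lt n _ _ (by omega)) hjk hk.2.le
  · intro k hk
    rcases Nat.lt_or_ge k (m + 2) with h | h
    · obtain ⟨t0, t1⟩ := ht k h
      rw [hx k h, Sx_re, Sx_im]
      nlinarith
    · exact (sph k h).le

theorem mem_config (m n : ℕ) (z : ℂ) : z ∈ Sconfig m n ↔ ∃ k < m + n + 2, pt m n k = z := by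
  simp only [Sconfig, Finset.mem_union, Finset.mem_image, Finset.mem_range, Finset.mem_Icc]
  constructor
  · rintro (⟨k, hk, rfl⟩ | ⟨j, ⟨h1, h2⟩, rfl⟩)
    · exact ⟨k, by omega, if_pos hk⟩
    · refine ⟨j + (m + 1), by omega, ?_⟩
      unfold pt
      rw [if_neg (by omega), Nat.add_sub_cancel]
  · rintro ⟨k, hk, rfl⟩
    unfold pt
    split_ifs with h
    · exact Or.inl ⟨k, h, rfl⟩
    · exact Or.inr ⟨k - (m + 1), by omega, rfl⟩

end SCDProof

/-- For all `m, n ≥ 0`, `NC(S_{m,n})` admits a symmetric chain decomposition: it can be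
partitioned into saturated chains, each satisfying
`ρ(min C) + ρ(max C) = (m + n + 2) - 1`, where `ρ(π) = (m + n + 2) - #blocks(π)`. -/
theorem nc_S_symmetric_chain_decomposition (m n : ℕ) :
    ∃ chains : Set (List (NC (Sconfig m n))),
      [] ∉ chains ∧
      (∀ x : NC (Sconfig m n), ∃! l, l ∈ chains ∧ x ∈ l) ∧
      (∀ l ∈ chains, List.Chain' (· ⋖ ·) l) ∧
      ∀ l ∈ chains, ∀ h : l ≠ [],
        ((m + n + 2) - (l.head h).parts.card) +
            ((m + n + 2) - (l.getLast h).parts.card) = (m + n + 2) - 1 := by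
  exact SCDProof.final (SCDProof.conf m n) (SCDProof.mem_config m n)
end

section
/- Let s_{m,n} denote the cardinality of NC(S_{m,n}) and let C_j denote the j-th Catalan number. For all m ≥ 1 and n ≥ 1, s_{m,n} = 2·s_{m−1,n} + Σ_{k=1}^{n} s_{m−1,k−1}·C_{n−k+1}. -/
open Finset

/-- Combinatorial noncrossing relations on `[a, b)` where indices below `K` are collinear. -/
structure IsR (a b K : ℕ) (r : ℕ → ℕ → Prop) : Prop where
  refl : ∀ i, r i i
  symm : ∀ i j, r i j → r j i
  trans : ∀ i j k, r i j → r j k → r i k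
  supp : ∀ i j, r i j → i ≠ j → a ≤ i ∧ i < b
  nc1 : ∀ x y z w, x < y → y < z → z < w → r x z → r y w → r x y
  nc2 : ∀ x y z, x < y → y < z → z < K → r x z → r x y

def RSet (a b K : ℕ) : Set (ℕ → ℕ → Prop) := {r | IsR a b K r}

noncomputable def RN (a b K : ℕ) : ℕ := (RSet a b K).ncard

theorem RSet_finite (a b K : ℕ) : (RSet a b K).Finite := by
  classical
  refine Set.Finite.of_finite_image (f := fun r => {p : ℕ × ℕ | p ∈ (Finset.Ico a b ×ˢ Finset.Ico a b) ∧ r p.1 p.2}) ?_ ?_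
  · refine Set.Finite.subset (Set.Finite.finite_subsets (Finset.finite_toSet (Finset.Ico a b ×ˢ Finset.Ico a b))) ?_
    rintro _ ⟨r, hr, rfl⟩
    intro p hp
    exact hp.1
  · intro r hr s hs h
    funext i j
    have h1 := Set.ext_iff.1 h (i, j)
    simp only [Set.mem_ofPred_eq, Finset.mem_product, Finset.mem_Ico] at h1
    by_cases hij : i = j
    · subst hij; simp [hr.refl, hs.refl]
    · have a1 := hr.supp i j
      have a2 := hr.supp j i
      have a3 := hs.supp i j
      have a4 := hs.supp j i
      have a5 := hr.symm i j
      have a6 := hs.symm i j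
      apply propext
      grind

theorem RN_self (a b K : ℕ) (h : b ≤ a) : RN a b K = 1 := by
  rw [RN, Set.ncard_eq_one]
  refine ⟨fun i j => i = j, ?_⟩
  ext r
  simp only [Set.mem_singleton_iff]
  constructor
  · intro hr
    funext i j
    apply propext
    have := hr.supp i j
    have := hr.refl i
    grind
  · rintro rfl
    constructor <;> grind

def glue (a k : ℕ) (s t : ℕ → ℕ → Prop) : ℕ → ℕ → Prop :=
  fun i j => s i j ∨ t (if i = a then k else i) (if j = a then k else j)

def restr (c d : ℕ) (r : ℕ → ℕ → Prop) : ℕ → ℕ → Prop :=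
  fun i j => i = j ∨ (r i j ∧ c ≤ i ∧ i < d ∧ c ≤ j ∧ j < d)

theorem IsR.restr {a b K : ℕ} {r : ℕ → ℕ → Prop} (h : IsR a b K r) (c d : ℕ) :
    IsR c d K (restr c d r) := by
  obtain ⟨h1, h2, h3, h4, h5, h6⟩ := h
  constructor
  · intro i; left; rfl
  · rintro i j (h | h)
    · left; exact h.symm
    · right; exact ⟨h2 _ _ h.1, h.2.2.2.1, h.2.2.2.2, h.2.1, h.2.2.1⟩
  · rintro i j k (rfl | h) (rfl | h')
    · left; rfl
    · right; exact h'
    · right; exact h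
    · right; exact ⟨h3 _ _ _ h.1 h'.1, h.2.1, h.2.2.1, h'.2.2.2⟩
  · rintro i j (h | h) hij
    · exact absurd h hij
    · exact ⟨h.2.1, h.2.2.1⟩
  · rintro x y z w hxy hyz hzw (h | h) (h' | h')
    · omega
    · omega
    · omega
    · right; exact ⟨h5 x y z w hxy hyz hzw h.1 h'.1, by omega, by omega, by omega, by omega⟩
  · rintro x y z hxy hyz hz (h | h)
    · omega
    · right; exact ⟨h6 x y z hxy hyz hz h.1, by omega, by omega, by omega, by omega⟩

theorem IsR.supp' {a b K : ℕ} {r : ℕ → ℕ → Prop} (h : IsR a b K r) (i j : ℕ) (hr : r i j) :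
    i = j ∨ (a ≤ i ∧ i < b ∧ a ≤ j ∧ j < b) := by
  by_cases hij : i = j
  · exact Or.inl hij
  · have := h.supp i j hr hij
    have := h.supp j i (h.symm _ _ hr) (Ne.symm hij)
    omega

theorem glue_iff {a b K k : ℕ} {s t : ℕ → ℕ → Prop} (hs : IsR (a+1) k K s) (ht : IsR k b K t)
    (hk : a < k) (hkb : k < b) (i j : ℕ) : glue a k s t i j ↔
      i = j ∨ (a < i ∧ i < k ∧ a < j ∧ j < k ∧ s i j) ∨
      (i = a ∧ k ≤ j ∧ j < b ∧ t k j) ∨ (j = a ∧ k ≤ i ∧ i < b ∧ t i k) ∨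
      (k ≤ i ∧ i < b ∧ k ≤ j ∧ j < b ∧ t i j) := by
  unfold glue
  have s1 := hs.supp' i j
  have t1 := ht.supp' i j
  have t2 := ht.supp' k j
  have t3 := ht.supp' i k
  have t4 := ht.refl
  have s4 := hs.refl
  split_ifs with h1 h2 h2 <;> grind

theorem glue_isR {a b K k : ℕ} {s t : ℕ → ℕ → Prop} (hs : IsR (a+1) k K s) (ht : IsR k b K t)
    (hk : a < k) (hkb : k < b) (hK : k = a + 1 ∨ K ≤ k) : IsR a b K (glue a k s t) := by
  have H := glue_iff hs ht hk hkb
  obtain ⟨s1, s2, s3, s4, s5, s6⟩ := hs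
  obtain ⟨t1, t2, t3, t4, t5, t6⟩ := ht
  constructor
  · intro i; rw [H]; left; rfl
  · intro i j; rw [H, H]; grind
  · intro i j l; rw [H, H, H]
    have := s3 i j l
    have := t3 i j l
    have := t3 k j l
    have := t3 i k l
    have := t3 i j k
    have := t2 k j
    grind
  · intro i j; rw [H]; grind
  · intro x y z w hxy hyz hzw; rw [H, H, H]
    have := s5 x y z w hxy hyz hzw
    have := t5 x y z w hxy hyz hzw
    have := t5 k y z w
    have := t1 k
    grind
  · intro x y z hxy hyz hz; rw [H, H]
    have := s6 x y z hxy hyz hz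
    have := t6 x y z hxy hyz hz
    have := t6 k y z
    have := t1 k
    grind

/-- relations where `k` is the successor of `a` in its block -/
def RNext (a b K k : ℕ) : Set (ℕ → ℕ → Prop) :=
  {r | IsR a b K r ∧ r a k ∧ ∀ j, a < j → j < k → ¬ r a j}

theorem RNext_eq {a b K k : ℕ} (hk : a < k) (hkb : k < b) (hK : k = a + 1 ∨ K ≤ k) :
    RNext a b K k = (fun p : (ℕ → ℕ → Prop) × (ℕ → ℕ → Prop) => glue a k p.1 p.2) ''
      (RSet (a+1) k K ×ˢ RSet k b K) := by
  ext r
  constructor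
  · rintro ⟨hr, hak, hj⟩
    refine ⟨(restr (a+1) k r, restr k b r), ⟨hr.restr _ _, hr.restr _ _⟩, ?_⟩
    funext i j
    apply propext
    simp only
    rw [glue_iff (hr.restr _ _) (hr.restr _ _) hk hkb]
    unfold restr
    have hs := hr.supp' i j
    obtain ⟨h1, h2, h3, h4, h5, h6⟩ := hr
    constructor
    · have := h3 a k j
      have := h3 i k a
      have := h1 i
      have := h2 a k
      grind
    · intro hij
      rcases hs hij with h | h
      · left; exact h
      · have q1 := h3 k a j (h2 _ _ hak)
        have q2 := h3 i a k
        have q3 := h2 i j hij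
        have q4 := hj i
        have q5 := hj j
        have q6 := h5 a i k j
        have q7 := h5 a j k i
        grind
  · rintro ⟨⟨s, t⟩, ⟨hs, ht⟩, rfl⟩
    simp only [RSet, Set.mem_ofPred_eq] at hs ht
    have H := glue_iff hs ht hk hkb
    refine ⟨glue_isR hs ht hk hkb hK, ?_, ?_⟩
    · simp only [H]
      have := ht.refl k
      grind
    · simp only [H]
      grind

theorem glue_injOn {a b K k : ℕ} (hk : a < k) (hkb : k < b) :
    Set.InjOn (fun p : (ℕ → ℕ → Prop) × (ℕ → ℕ → Prop) => glue a k p.1 p.2)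
      (RSet (a+1) k K ×ˢ RSet k b K) := by
  rintro ⟨s, t⟩ ⟨hs, ht⟩ ⟨s', t'⟩ ⟨hs', ht'⟩ h
  simp only [RSet, Set.mem_ofPred_eq] at hs ht hs' ht' h
  have key : ∀ i j, glue a k s t i j ↔ glue a k s' t' i j := fun i j => by rw [h]
  simp only [glue_iff hs ht hk hkb, glue_iff hs' ht' hk hkb] at key
  ext i j
  · have := key i j
    have := hs.supp' i j
    have := hs'.supp' i j
    have := hs.refl i
    have := hs'.refl i
    simp only
    grind
  · have := key i j
    have := ht.supp' i j
    have := ht'.supp' i j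
    have := ht.refl i
    have := ht'.refl i
    simp only
    grind

theorem RNext_card {a b K k : ℕ} (hk : a < k) (hkb : k < b) :
    (RNext a b K k).ncard = if k = a + 1 ∨ K ≤ k then RN (a+1) k K * RN k b K else 0 := by
  split_ifs with hK
  · rw [RNext_eq hk hkb hK, Set.InjOn.ncard_image (glue_injOn hk hkb), Set.ncard_prod]
    rfl
  · rw [Set.ncard_eq_zero ((RSet_finite a b K).subset fun r hr => hr.1)]
    ext r
    simp only [Set.mem_empty_iff_false, iff_false]
    rintro ⟨hr, hak, hj⟩
    exact hj (a+1) (by omega) (by omega) (hr.nc2 a (a+1) k (by omega) (by omega) (by omega) hak)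

theorem ncard_biUnion_fin {ι α : Type*} [DecidableEq ι] (s : Finset ι) (f : ι → Set α)
    (hf : ∀ i, (f i).Finite)
    (hd : ∀ i ∈ s, ∀ j ∈ s, i ≠ j → Disjoint (f i) (f j)) :
    (⋃ k ∈ s, f k).ncard = ∑ k ∈ s, (f k).ncard := by
  induction s using Finset.induction_on with
  | empty => simp
  | insert a s ha ih =>
    have hfu : (⋃ k ∈ s, f k).Finite := Set.Finite.biUnion (Finset.finite_toSet s) fun k _ => hf k
    rw [Finset.sum_insert ha, Finset.set_biUnion_insert, Set.ncard_union_eq _ (hf a) hfu, ih]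
    · intro i hi j hj
      exact hd i (Finset.mem_insert_of_mem hi) j (Finset.mem_insert_of_mem hj)
    · rw [Set.disjoint_iUnion₂_right]
      intro i hi
      exact hd a (Finset.mem_insert_self _ _) i (Finset.mem_insert_of_mem hi)
        (fun h => ha (h ▸ hi))

theorem RN_rec (a b K : ℕ) (hab : a < b) :
    RN a b K = RN (a+1) b K + ∑ k ∈ Finset.Ico (a+1) b,
      if k = a + 1 ∨ K ≤ k then RN (a+1) k K * RN k b K else 0 := by
  have hU : RSet a b K = RSet (a+1) b K ∪ ⋃ k ∈ Finset.Ico (a+1) b, RNext a b K k := by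
    ext r
    simp only [Set.mem_union, Set.mem_iUnion, Finset.mem_Ico]
    constructor
    · intro hr
      by_cases hs : ∃ j, a < j ∧ r a j
      · right
        classical
        refine ⟨Nat.find hs, ⟨(Nat.find_spec hs).1, ?_⟩, hr, (Nat.find_spec hs).2, ?_⟩
        · have := hr.supp' _ _ (Nat.find_spec hs).2
          have := (Nat.find_spec hs).1
          omega
        · intro j hj hj' hr'
          exact Nat.find_min hs hj' ⟨hj, hr'⟩
      · left
        push Not at hs
        refine ⟨hr.refl, hr.symm, hr.trans, ?_, hr.nc1, hr.nc2⟩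
        intro i j hij hne
        have h1 := hr.supp' i j hij
        have h2 := hs j
        have : i ≠ a := by rintro rfl; exact hs j (by omega) hij
        omega
    · rintro (hr | ⟨k, hk, hr⟩)
      · refine ⟨hr.refl, hr.symm, hr.trans, ?_, hr.nc1, hr.nc2⟩
        intro i j hij hne
        have := hr.supp i j hij hne
        omega
      · exact hr.1
  have hfin : ∀ k, (RNext a b K k).Finite := fun k => (RSet_finite a b K).subset fun r hr => hr.1
  have hU2 : (⋃ k ∈ Finset.Ico (a+1) b, RNext a b K k).ncard =
      ∑ k ∈ Finset.Ico (a+1) b, (RNext a b K k).ncard := by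
    apply ncard_biUnion_fin _ _ hfin
    intro i hi j hj hij
    rw [Finset.mem_Ico] at hi hj
    rw [Set.disjoint_left]
    rintro r ⟨_, h1, h2⟩ ⟨_, h3, h4⟩
    rcases lt_or_gt_of_ne hij with h | h
    · exact h4 i (by omega) h h1
    · exact h2 j (by omega) h h3
  have hfu : (⋃ k ∈ Finset.Ico (a+1) b, RNext a b K k).Finite :=
    Set.Finite.biUnion (Finset.finite_toSet (Finset.Ico (a+1) b)) fun k _ => hfin k
  rw [RN, hU, Set.ncard_union_eq _ (RSet_finite _ _ _) hfu, hU2, RN]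
  · congr 1
    apply Finset.sum_congr rfl
    intro k hk
    rw [Finset.mem_Ico] at hk
    exact RNext_card (by omega) (by omega)
  · rw [Set.disjoint_left]
    intro r hr hr'
    simp only [Set.mem_iUnion, Finset.mem_Ico] at hr'
    obtain ⟨k, hk, hr'⟩ := hr'
    have := hr.supp a k hr'.2.1 (by omega)
    omega

theorem RN_catalan (n a b K : ℕ) (hK : K ≤ a) (hn : b - a = n) : RN a b K = catalan n := by
  induction n using Nat.strong_induction_on generalizing a b with
  | _ n ih =>
    obtain _ | n := n
    · rw [RN_self _ _ _ (by omega), catalan_zero]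
    · rw [RN_rec _ _ _ (by omega), ih n (by omega) (a+1) b (by omega) (by omega), catalan_succ,
        Fin.sum_univ_castSucc, add_comm]
      simp only [Fin.val_castSucc, Fin.val_last, Nat.sub_self, catalan_zero, mul_one]
      congr 1
      obtain rfl : b = a + 1 + n := by omega
      rw [Finset.sum_Ico_eq_sum_range, Fin.sum_univ_eq_sum_range (fun i => catalan i * catalan (n - i))]
      rw [show a + 1 + n - (a + 1) = n by omega]
      apply Finset.sum_congr rfl
      intro i hi
      rw [Finset.mem_range] at hi
      rw [if_pos (by omega), ih i (by omega) _ _ (by omega) (by omega),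
        ih (n - i) (by omega) _ _ (by omega) (by omega)]

theorem RN_shift (n a b K : ℕ) (hn : b - a = n) : RN (a+1) (b+1) (K+1) = RN a b K := by
  induction n using Nat.strong_induction_on generalizing a b with
  | _ n ih =>
    obtain _ | n := n
    · rw [RN_self _ _ _ (by omega), RN_self _ _ _ (by omega)]
    · rw [RN_rec _ _ _ (by omega), RN_rec a _ _ (by omega), ih n (by omega) (a+1) b (by omega),
        ← Finset.sum_Ico_add' _ (a+1) b 1]
      congr 1
      apply Finset.sum_congr rfl
      intro i hi
      rw [Finset.mem_Ico] at hi
      rw [ih (i - (a+1)) (by omega) _ _ (by omega), ih (b - i) (by omega) _ _ (by omega)]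
      simp

theorem RN_main (m n : ℕ) (hm : 1 ≤ m) :
    RN 0 (m + 2 + n) (m + 2) = 2 * RN 0 (m - 1 + 2 + n) (m - 1 + 2) +
      ∑ k ∈ Finset.Icc 1 n, RN 0 (m - 1 + 2 + (k - 1)) (m - 1 + 2) * catalan (n - k + 1) := by
  obtain ⟨m, rfl⟩ : ∃ l, m = l + 1 := ⟨m - 1, by omega⟩
  rw [RN_rec _ _ _ (by omega), Finset.sum_eq_sum_Ico_succ_bot (by omega)]
  rw [RN_self _ 1 _ (by omega)]
  simp only [Nat.add_sub_cancel]
  have e : RN 1 (m + 1 + 2 + n) (m + 1 + 2) = RN 0 (m + 2 + n) (m + 2) := by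
    have := RN_shift _ 0 (m + 2 + n) (m + 2) rfl
    rw [← this]
    congr 1; omega
  simp only [zero_add, true_or, if_true, one_mul, e]
  rw [two_mul, ← add_assoc]
  congr 1
  rw [← Finset.sum_Ico_consecutive _ (show 1 + 1 ≤ m + 1 + 2 by omega) (show m + 1 + 2 ≤ m + 1 + 2 + n by omega)]
  rw [Finset.sum_eq_zero, zero_add]
  · rw [← Finset.Ico_add_one_right_eq_Icc, Finset.sum_Ico_eq_sum_range, Finset.sum_Ico_eq_sum_range]
    rw [show m + 1 + 2 + n - (m + 1 + 2) = n by omega, Nat.add_sub_cancel]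
    apply Finset.sum_congr rfl
    intro i hi
    rw [Finset.mem_range] at hi
    rw [if_pos (by omega), RN_catalan _ (m + 1 + 2 + i) _ _ (by omega) rfl]
    have := RN_shift _ 0 (m + 2 + i) (m + 2) rfl
    rw [show 1 + i - 1 = i by omega, ← this]
    congr 2 <;> omega
  · intro i hi
    rw [Finset.mem_Ico] at hi
    rw [if_neg (by omega)]

/-- Twice the signed area of the triangle `A B C`. -/
def det3 (A B C : ℂ) : ℝ :=
  (B.re - A.re) * (C.im - A.im) - (B.im - A.im) * (C.re - A.re)

theorem det3_rot (A B C : ℂ) : det3 B C A = det3 A B C := by unfold det3; ring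

theorem det3_swap (A B C : ℂ) : det3 A C B = - det3 A B C := by unfold det3; ring

/-- Separation by a linear functional. -/
theorem hull_sep {S T : Set ℂ} (α β c : ℝ) (hS : ∀ z ∈ S, α * z.re + β * z.im ≤ c)
    (hT : ∀ z ∈ T, c < α * z.re + β * z.im) :
    Disjoint (convexHull ℝ S) (convexHull ℝ T) := by
  have hlin : IsLinearMap ℝ (fun z : ℂ => α * z.re + β * z.im) := by
    constructor
    · intro x y; simp; ring
    · intro t x; simp; ring
  have h1 : convexHull ℝ S ⊆ {z : ℂ | α * z.re + β * z.im ≤ c} :=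
    convexHull_min hS (convex_halfSpace_le hlin c)
  have h2 : convexHull ℝ T ⊆ {z : ℂ | c < α * z.re + β * z.im} :=
    convexHull_min hT (convex_halfSpace_gt hlin c)
  rw [Set.disjoint_left]
  intro z hz hz'
  have a1 : α * z.re + β * z.im ≤ c := h1 hz
  have a2 : c < α * z.re + β * z.im := h2 hz'
  linarith

theorem hull_sep_det {S T : Set ℂ} (A B : ℂ) (hS : ∀ z ∈ S, det3 A B z ≤ 0)
    (hT : ∀ z ∈ T, 0 < det3 A B z) :
    Disjoint (convexHull ℝ S) (convexHull ℝ T) := by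
  refine hull_sep (-(B.im - A.im)) (B.re - A.re)
    (A.im * (B.re - A.re) - (B.im - A.im) * A.re) ?_ ?_
  · intro z hz
    have := hS z hz
    unfold det3 at this
    linarith
  · intro z hz
    have := hT z hz
    unfold det3 at this
    linarith

/-- Crossing segments. -/
theorem hull_meet {S T : Set ℂ} (A B C D : ℂ) (hA : A ∈ S) (hC : C ∈ S) (hB : B ∈ T) (hD : D ∈ T)
    (h1 : 0 ≤ det3 B C D) (h2 : 0 ≤ det3 A C D) (h3 : 0 < det3 A B D) (h4 : 0 ≤ det3 A B C) :
    ¬ Disjoint (convexHull ℝ S) (convexHull ℝ T) := by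
  rw [Set.not_disjoint_iff]
  set u := det3 B C D + det3 A B D with hu
  have hu' : u = det3 A C D + det3 A B C := by rw [hu]; unfold det3; ring
  have hupos : 0 < u := by linarith
  have hmS : (det3 B C D / u) • A + (det3 A B D / u) • C ∈ convexHull ℝ S :=
    (convex_convexHull ℝ S) (subset_convexHull ℝ S hA) (subset_convexHull ℝ S hC)
      (by positivity) (by positivity) (by rw [← add_div]; exact div_self hupos.ne')
  have hmT : (det3 A C D / u) • B + (det3 A B C / u) • D ∈ convexHull ℝ T :=
    (convex_convexHull ℝ T) (subset_convexHull ℝ T hB) (subset_convexHull ℝ T hD)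
      (by positivity) (by positivity) (by rw [← add_div, ← hu']; exact div_self hupos.ne')
  refine ⟨_, hmS, ?_⟩
  convert hmT using 1
  apply Complex.ext
  · simp only [Complex.add_re, Complex.real_smul, Complex.mul_re, Complex.ofReal_re,
      Complex.ofReal_im, zero_mul, sub_zero]
    field_simp
    unfold det3; ring
  · simp only [Complex.add_im, Complex.real_smul, Complex.mul_im, Complex.ofReal_re,
      Complex.ofReal_im, zero_mul, add_zero]
    field_simp
    unfold det3; ring

/-- A real point between two real points. -/
theorem hull_meet_real {S T : Set ℂ} (A B C : ℂ) (hA : A ∈ S) (hC : C ∈ S) (hB : B ∈ T)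
    (iA : A.im = 0) (iB : B.im = 0) (iC : C.im = 0) (h1 : A.re < B.re) (h2 : B.re < C.re) :
    ¬ Disjoint (convexHull ℝ S) (convexHull ℝ T) := by
  rw [Set.not_disjoint_iff]
  have hpos : 0 < C.re - A.re := by linarith
  have q1 : 0 < C.re - B.re := by linarith
  have q2 : 0 < B.re - A.re := by linarith
  have hmS : ((C.re - B.re) / (C.re - A.re)) • A + ((B.re - A.re) / (C.re - A.re)) • C
      ∈ convexHull ℝ S :=
    (convex_convexHull ℝ S) (subset_convexHull ℝ S hA) (subset_convexHull ℝ S hC)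
      (by positivity) (by positivity) (by field_simp; ring)
  refine ⟨B, ?_, subset_convexHull ℝ T hB⟩
  convert hmS using 1
  apply Complex.ext
  · simp only [Complex.add_re, Complex.real_smul, Complex.mul_re, Complex.ofReal_re,
      Complex.ofReal_im, zero_mul, sub_zero]
    field_simp
    ring
  · simp only [Complex.add_im, Complex.real_smul, Complex.mul_im, Complex.ofReal_re,
      Complex.ofReal_im, zero_mul, add_zero, iA, iB, iC, mul_zero]

/-- Weakly convex configuration. -/
structure IsConf (N K : ℕ) (p : ℕ → ℂ) : Prop where
  hK : 2 ≤ K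
  pos : ∀ a b c, a < b → b < c → c < N → K ≤ c → 0 < det3 (p a) (p b) (p c)
  real : ∀ i, i < K → (p i).im = 0
  mono : ∀ i j, i < j → j < K → (p i).re < (p j).re
  upper : ∀ i, K ≤ i → i < N → 0 < (p i).im

namespace IsConf
variable {N K : ℕ} {p : ℕ → ℂ}

theorem nonneg (h : IsConf N K p) (a b c : ℕ) (hab : a < b) (hbc : b < c) (hc : c < N) :
    0 ≤ det3 (p a) (p b) (p c) := by
  by_cases hK : K ≤ c
  · exact (h.pos a b c hab hbc hc hK).le
  · unfold det3
    rw [h.real a (by omega), h.real b (by omega), h.real c (by omega)]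
    simp

theorem ne_of_lt (h : IsConf N K p) (a b : ℕ) (hab : a < b) (hb : b < N) : p a ≠ p b := by
  intro he
  by_cases hK : K ≤ b
  · have hk := h.hK
    by_cases ha : a = 0
    · subst ha
      have := h.pos 0 1 b (by omega) (by omega) hb hK
      rw [he] at this
      simp [det3] at this
    · have := h.pos 0 a b (by omega) (by omega) hb hK
      rw [he] at this
      unfold det3 at this
      linarith
  · have := h.mono a b hab (by omega)
    rw [he] at this
    exact lt_irrefl _ this

theorem inj (h : IsConf N K p) (a b : ℕ) (ha : a < N) (hb : b < N) (hp : p a = p b) : a = b := by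
  rcases lt_trichotomy a b with hh | hh | hh
  · exact absurd hp (h.ne_of_lt a b hh hb)
  · exact hh
  · exact absurd hp.symm (h.ne_of_lt b a hh ha)

/-- Separation of two noncrossing index sets, with `min I < min J`. -/
theorem sep_aux (h : IsConf N K p) (I J : Finset ℕ) (hI : I.Nonempty) (hJ : J.Nonempty)
    (hIN : ∀ i ∈ I, i < N) (hJN : ∀ i ∈ J, i < N) (hd : ∀ i ∈ I, i ∉ J)
    (h1 : ∀ x ∈ I, ∀ y ∈ J, ∀ z ∈ I, ∀ w ∈ J, x < y → y < z → z < w → False)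
    (h2 : ∀ x ∈ I, ∀ y ∈ J, ∀ z ∈ I, x < y → y < z → z < K → False)
    (hmin : I.min' hI < J.min' hJ) :
    Disjoint (convexHull ℝ (p '' (I : Set ℕ))) (convexHull ℝ (p '' (J : Set ℕ))) := by
  set f := I.min' hI with hf
  set e := I.max' hI with he
  set g := J.min' hJ with hg
  set l := J.max' hJ with hl
  have hfI : f ∈ I := I.min'_mem hI
  have heI : e ∈ I := I.max'_mem hI
  have hgJ : g ∈ J := J.min'_mem hJ
  have hlJ : l ∈ J := J.max'_mem hJ
  have hfle : ∀ i ∈ I, f ≤ i := fun i hi => I.min'_le i hi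
  have hele : ∀ i ∈ I, i ≤ e := fun i hi => I.le_max' i hi
  have hgle : ∀ i ∈ J, g ≤ i := fun i hi => J.min'_le i hi
  have hlle : ∀ i ∈ J, i ≤ l := fun i hi => J.le_max' i hi
  by_cases hex : e < g
  · -- `I` is entirely before `J`
    by_cases c1 : f < e ∧ K ≤ e
    · refine hull_sep_det (p f) (p e) ?_ ?_
      · rintro _ ⟨i, hi, rfl⟩
        have a1 := hfle i hi
        have a2 := hele i hi
        rcases Nat.eq_or_lt_of_le a1 with rfl | a1
        · simp [det3]
        rcases Nat.eq_or_lt_of_le a2 with a2 | a2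
        · rw [a2]; unfold det3; linarith
        have := h.nonneg f i e a1 a2 (hIN _ heI)
        rw [det3_swap] at this
        linarith
      · rintro _ ⟨i, hi, rfl⟩
        have := hgle i hi
        exact h.pos f e i c1.1 (by omega) (hJN i hi) (by omega)
    by_cases c2 : g < l ∧ K ≤ l
    · refine Disjoint.symm (hull_sep_det (p g) (p l) ?_ ?_)
      · rintro _ ⟨i, hi, rfl⟩
        have a1 := hgle i hi
        have a2 := hlle i hi
        rcases Nat.eq_or_lt_of_le a1 with a1 | a1
        · rw [← a1]; simp [det3]
        rcases Nat.eq_or_lt_of_le a2 with a2 | a2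
        · rw [a2]; unfold det3; linarith
        have := h.nonneg g i l a1 a2 (hJN _ hlJ)
        rw [det3_swap] at this
        linarith
      · rintro _ ⟨i, hi, rfl⟩
        have := hele i hi
        rw [det3_rot]
        exact h.pos i g l (by omega) c2.1 (hJN l hlJ) c2.2
    by_cases c3 : l < K
    · refine hull_sep 1 0 (p e).re ?_ ?_
      · rintro _ ⟨i, hi, rfl⟩
        rcases Nat.eq_or_lt_of_le (hele i hi) with a2 | a2
        · rw [a2]; linarith
        · have := h.mono i e a2 (by have := hgle l hlJ; omega)
          linarith
      · rintro _ ⟨i, hi, rfl⟩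
        have := h.mono e i (by have := hgle i hi; omega) (by have := hlle i hi; omega)
        linarith
    by_cases c4 : e < K
    · refine hull_sep 0 1 0 ?_ ?_
      · rintro _ ⟨i, hi, rfl⟩
        have := hele i hi
        rw [h.real i (by omega)]; simp
      · rintro _ ⟨i, hi, rfl⟩
        have := hgle i hi
        have := hlle i hi
        have := h.upper i (by omega) (hJN i hi)
        linarith
    · have hIe : (p '' (I : Set ℕ)) = {p e} := by
        ext z
        simp only [Set.mem_image, Set.mem_singleton_iff]
        constructor
        · rintro ⟨i, hi, rfl⟩
          have := hfle i hi
          have := hele i hi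
          rw [show i = e by omega]
        · rintro rfl; exact ⟨e, heI, rfl⟩
      have hJe : (p '' (J : Set ℕ)) = {p g} := by
        ext z
        simp only [Set.mem_image, Set.mem_singleton_iff]
        constructor
        · rintro ⟨i, hi, rfl⟩
          have := hgle i hi
          have := hlle i hi
          rw [show i = g by omega]
        · rintro rfl; exact ⟨g, hgJ, rfl⟩
      rw [hIe, hJe, convexHull_singleton, convexHull_singleton, Set.disjoint_singleton]
      exact h.ne_of_lt e g hex (hJN g hgJ)
  · -- `J` sits in a gap of `I`
    have hge : g < e := by
      have : e ≠ g := fun hh => hd e heI (hh ▸ hgJ)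
      omega
    have hU : (I.filter (· < g)).Nonempty := ⟨f, by simp [hfI, hmin]⟩
    have hV : (I.filter (g < ·)).Nonempty := ⟨e, by simp [heI, hge]⟩
    obtain ⟨u, hu, humax⟩ := (I.filter (· < g)).exists_max_image id hU
    obtain ⟨v, hv, hvmin⟩ := (I.filter (g < ·)).exists_min_image id hV
    simp only [Finset.mem_filter, id] at hu hv humax hvmin
    have hJuv : ∀ j ∈ J, u < j ∧ j < v := by
      intro j hj
      have a := hgle j hj
      refine ⟨by omega, ?_⟩
      by_contra hc
      have : j ≠ v := fun hh => hd v hv.1 (hh ▸ hj)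
      exact h1 u hu.1 g hgJ v hv.1 j hj hu.2 hv.2 (by omega)
    have hvK : K ≤ v := by
      by_contra hc
      exact h2 u hu.1 g hgJ v hv.1 hu.2 hv.2 (by omega)
    have hvN := hIN v hv.1
    refine hull_sep_det (p v) (p u) ?_ ?_
    · rintro _ ⟨i, hi, rfl⟩
      have hig : i ≠ g := fun hh => hd i hi (hh ▸ hgJ)
      rw [det3_rot, det3_rot] 
      rcases lt_or_gt_of_ne hig with hlt | hgt
      · have := humax i ⟨hi, hlt⟩
        rcases Nat.eq_or_lt_of_le this with rfl | a
        · unfold det3; linarith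
        · have := h.pos i u v a (by omega) hvN hvK
          rw [← det3_rot, ← det3_rot, det3_swap] at this
          rw [← det3_rot, ← det3_rot]
          linarith
      · have := hvmin i ⟨hi, hgt⟩
        rcases Nat.eq_or_lt_of_le this with rfl | a
        · unfold det3; linarith
        · have := h.pos u v i (by omega) a (hIN i hi) (by omega)
          unfold det3 at *; linarith
    · rintro _ ⟨i, hi, rfl⟩
      have := hJuv i hi
      have := h.pos u i v this.1 this.2 hvN hvK
      unfold det3 at *; linarith

theorem sep (h : IsConf N K p) (I J : Finset ℕ) (hI : I.Nonempty) (hJ : J.Nonempty)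
    (hIN : ∀ i ∈ I, i < N) (hJN : ∀ i ∈ J, i < N) (hd : ∀ i ∈ I, i ∉ J)
    (h1 : ∀ x ∈ I, ∀ y ∈ J, ∀ z ∈ I, ∀ w ∈ J, x < y → y < z → z < w → False)
    (h2 : ∀ x ∈ I, ∀ y ∈ J, ∀ z ∈ I, x < y → y < z → z < K → False)
    (h3 : ∀ x ∈ J, ∀ y ∈ I, ∀ z ∈ J, ∀ w ∈ I, x < y → y < z → z < w → False)
    (h4 : ∀ x ∈ J, ∀ y ∈ I, ∀ z ∈ J, x < y → y < z → z < K → False) :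
    Disjoint (convexHull ℝ (p '' (I : Set ℕ))) (convexHull ℝ (p '' (J : Set ℕ))) := by
  rcases lt_trichotomy (I.min' hI) (J.min' hJ) with hlt | heq | hgt
  · exact h.sep_aux I J hI hJ hIN hJN hd h1 h2 hlt
  · exact absurd (heq ▸ J.min'_mem hJ) (hd _ (I.min'_mem hI))
  · exact (h.sep_aux J I hJ hI hJN hIN (fun i hi hi' => hd i hi' hi) h3 h4 hgt).symm

end IsConf

/-- The index relation of a partition. -/
def prel (N : ℕ) (p : ℕ → ℂ) (π : Finpartition ((Finset.range N).image p)) : ℕ → ℕ → Prop :=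
  fun i j => i = j ∨ (i < N ∧ j < N ∧ π.part (p i) = π.part (p j))

theorem prel_isR {N K : ℕ} {p : ℕ → ℂ} (h : IsConf N K p)
    (hKN : K ≤ N)
    (π : Finpartition ((Finset.range N).image p)) (hπ : IsNoncrossing π) :
    IsR 0 N K (prel N p π) := by
  have hmem : ∀ i, i < N → p i ∈ (Finset.range N).image p := fun i hi =>
    Finset.mem_image_of_mem _ (Finset.mem_range.2 hi)
  have nc2 : ∀ x y z, x < y → y < z → z < K → prel N p π x z → prel N p π x y := by
    rintro x y z hxy hyz hzK (hxz | ⟨hx, hz, hxz⟩)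
    · omega
    right
    have hy : y < N := by omega
    refine ⟨hx, hy, ?_⟩
    by_contra hne
    have hdis := hπ (π.part_mem.2 (hmem x hx)) (π.part_mem.2 (hmem y hy)) hne
    have m1 : p x ∈ π.part (p x) := π.mem_part_self.2 (hmem x hx)
    have m2 : p z ∈ π.part (p x) := hxz ▸ π.mem_part_self.2 (hmem z hz)
    have m3 : p y ∈ π.part (p y) := π.mem_part_self.2 (hmem y hy)
    exact hull_meet_real (p x) (p y) (p z) m1 m2 m3 (h.real x (by omega)) (h.real y (by omega))
      (h.real z hzK) (h.mono x y hxy (by omega)) (h.mono y z hyz hzK) hdis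
  constructor
  · intro i; left; rfl
  · intro i j hij; unfold prel at *; grind
  · intro i j l; unfold prel; grind
  · intro i j; unfold prel; grind
  · rintro x y z w hxy hyz hzw (hxz | ⟨hx, hz, hxz⟩) (hyw | ⟨hy, hw, hyw⟩)
    · omega
    · omega
    · omega
    right
    refine ⟨hx, hy, ?_⟩
    by_contra hne
    have hdis := hπ (π.part_mem.2 (hmem x hx)) (π.part_mem.2 (hmem y hy)) hne
    have m1 : p x ∈ π.part (p x) := π.mem_part_self.2 (hmem x hx)
    have m2 : p z ∈ π.part (p x) := hxz ▸ π.mem_part_self.2 (hmem z hz)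
    have m3 : p y ∈ π.part (p y) := π.mem_part_self.2 (hmem y hy)
    have m4 : p w ∈ π.part (p y) := hyw ▸ π.mem_part_self.2 (hmem w hw)
    by_cases hK : K ≤ w
    · exact hull_meet (p x) (p y) (p z) (p w) m1 m2 m3 m4
        (h.nonneg _ _ _ hyz hzw hw) (h.nonneg _ _ _ (by omega) hzw hw)
        (h.pos _ _ _ hxy (by omega) hw hK) (h.nonneg _ _ _ hxy hyz hz) hdis
    · rcases nc2 x y z hxy hyz (by omega) (Or.inr ⟨hx, hz, hxz⟩) with h' | h'
      · omega
      · exact hne h'.2.2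
  · exact nc2

theorem prel_nc {N K : ℕ} {p : ℕ → ℂ} (h : IsConf N K p)
    (π : Finpartition ((Finset.range N).image p)) (hR : IsR 0 N K (prel N p π)) :
    IsNoncrossing π := by
  intro B₁ hB₁ B₂ hB₂ hne
  simp only [Finset.mem_coe] at hB₁ hB₂
  have key : ∀ B ∈ π.parts, (B : Set ℂ) = p '' ((Finset.range N).filter (fun i => p i ∈ B) : Set ℕ) ∧
      ((Finset.range N).filter (fun i => p i ∈ B)).Nonempty := by
    intro B hB
    have hsub : ∀ z ∈ B, ∃ i < N, p i = z := by
      intro z hz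
      have := π.subset hB hz
      simpa using this
    constructor
    · ext z
      simp only [Set.mem_image, Finset.mem_coe, Finset.mem_filter, Finset.mem_range]
      constructor
      · intro hz
        obtain ⟨i, hi, rfl⟩ := hsub z hz
        exact ⟨i, ⟨hi, hz⟩, rfl⟩
      · rintro ⟨i, ⟨_, hz⟩, rfl⟩; exact hz
    · obtain ⟨z, hz⟩ := π.nonempty_of_mem_parts hB
      obtain ⟨i, hi, rfl⟩ := hsub z hz
      exact ⟨i, by simp [hi, hz]⟩
  obtain ⟨e1, n1⟩ := key B₁ hB₁
  obtain ⟨e2, n2⟩ := key B₂ hB₂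
  have same : ∀ B ∈ π.parts, ∀ i j, i < N → j < N → p i ∈ B → p j ∈ B → prel N p π i j := by
    intro B hB i j hi hj hpi hpj
    right
    exact ⟨hi, hj, by rw [π.part_eq_of_mem hB hpi, π.part_eq_of_mem hB hpj]⟩
  have diff : ∀ i j, i < N → j < N → p i ∈ B₁ → p j ∈ B₂ → prel N p π i j → False := by
    rintro i j hi hj hpi hpj (rfl | ⟨_, _, hh⟩)
    · exact hne (π.eq_of_mem_parts hB₁ hB₂ hpi hpj)
    · rw [π.part_eq_of_mem hB₁ hpi, π.part_eq_of_mem hB₂ hpj] at hh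
      exact hne hh
  show Disjoint (convexHull ℝ (B₁ : Set ℂ)) (convexHull ℝ (B₂ : Set ℂ))
  rw [e1, e2]
  have s1 := same B₁ hB₁
  have s2 := same B₂ hB₂
  apply h.sep _ _ n1 n2
  · intro i hi; simp at hi; exact hi.1
  · intro i hi; simp at hi; exact hi.1
  · intro i hi hi'
    simp only [Finset.mem_filter, Finset.mem_range] at hi hi'
    exact diff i i hi.1 hi.1 hi.2 hi'.2 (hR.refl i)
  all_goals simp only [Finset.mem_filter, Finset.mem_range]
  · rintro x ⟨hx, hx'⟩ y ⟨hy, hy'⟩ z ⟨hz, hz'⟩ w ⟨hw, hw'⟩ a1 a2 a3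
    exact diff x y hx hy hx' hy' (hR.nc1 x y z w a1 a2 a3 (s1 _ _ hx hz hx' hz') (s2 _ _ hy hw hy' hw'))
  · rintro x ⟨hx, hx'⟩ y ⟨hy, hy'⟩ z ⟨hz, hz'⟩ a1 a2 a3
    exact diff x y hx hy hx' hy' (hR.nc2 x y z a1 a2 a3 (s1 _ _ hx hz hx' hz'))
  · rintro x ⟨hx, hx'⟩ y ⟨hy, hy'⟩ z ⟨hz, hz'⟩ w ⟨hw, hw'⟩ a1 a2 a3
    exact diff y x hy hx hy' hx' (hR.symm _ _ (hR.nc1 x y z w a1 a2 a3 (s2 _ _ hx hz hx' hz') (s1 _ _ hy hw hy' hw')))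
  · rintro x ⟨hx, hx'⟩ y ⟨hy, hy'⟩ z ⟨hz, hz'⟩ a1 a2 a3
    exact diff y x hy hx hy' hx' (hR.symm _ _ (hR.nc2 x y z a1 a2 a3 (s2 _ _ hx hz hx' hz')))

theorem prel_inj {N : ℕ} {p : ℕ → ℂ}
    (π π' : Finpartition ((Finset.range N).image p)) (he : prel N p π = prel N p π') : π = π' := by
  have hpart : ∀ z ∈ (Finset.range N).image p, π.part z = π'.part z := by
    intro z hz
    ext w
    by_cases hw : w ∈ (Finset.range N).image p
    · rw [π.mem_part_iff_part_eq_part hw hz, π'.mem_part_iff_part_eq_part hw hz]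
      simp only [Finset.mem_image, Finset.mem_range] at hz hw
      obtain ⟨i, hi, rfl⟩ := hz
      obtain ⟨j, hj, rfl⟩ := hw
      have e := congrFun (congrFun he i) j
      unfold prel at e
      by_cases hij : i = j
      · subst hij; simp
      · simp only [hij, hi, hj, false_or, true_and, eq_iff_iff] at e
        rw [eq_comm, e, eq_comm]
    · exact ⟨fun hh => absurd (π.part_subset z hh) hw, fun hh => absurd (π'.part_subset z hh) hw⟩
  ext B
  constructor
  · intro hB
    obtain ⟨z, hz⟩ := π.nonempty_of_mem_parts hB
    rw [← π.part_eq_of_mem hB hz, hpart z (π.subset hB hz)]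
    exact π'.part_mem.2 (π.subset hB hz)
  · intro hB
    obtain ⟨z, hz⟩ := π'.nonempty_of_mem_parts hB
    rw [← π'.part_eq_of_mem hB hz, ← hpart z (π'.subset hB hz)]
    exact π.part_mem.2 (π'.subset hB hz)

theorem prel_surj {N K : ℕ} {p : ℕ → ℂ} (h : IsConf N K p) (r : ℕ → ℕ → Prop) (hr : IsR 0 N K r) :
    ∃ π : Finpartition ((Finset.range N).image p), prel N p π = r := by
  classical
  let st : Setoid ℂ :=
    { r := fun z w => z = w ∨ ∃ i j, i < N ∧ j < N ∧ p i = z ∧ p j = w ∧ r i j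
      iseqv := by
        constructor
        · intro z; left; rfl
        · rintro z w (rfl | ⟨i, j, hi, hj, h1, h2, h3⟩)
          · left; rfl
          · right; exact ⟨j, i, hj, hi, h2, h1, hr.symm _ _ h3⟩
        · rintro z w v (rfl | ⟨i, j, hi, hj, h1, h2, h3⟩) (rfl | ⟨i', j', hi', hj', h1', h2', h3'⟩)
          · left; rfl
          · right; exact ⟨i', j', hi', hj', h1', h2', h3'⟩
          · right; exact ⟨i, j, hi, hj, h1, h2, h3⟩
          · right
            have : j = i' := h.inj _ _ hj hi' (h2.trans h1'.symm)
            subst this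
            exact ⟨i, j', hi, hj', h1, h2', hr.trans _ _ _ h3 h3'⟩ }
  refine ⟨Finpartition.ofSetSetoid st _, ?_⟩
  have hmem : ∀ i, i < N → p i ∈ (Finset.range N).image p := fun i hi =>
    Finset.mem_image_of_mem _ (Finset.mem_range.2 hi)
  funext i j
  apply propext
  unfold prel
  by_cases hij : i = j
  · subst hij; simp [hr.refl]
  by_cases hN : i < N ∧ j < N
  · obtain ⟨hi, hj⟩ := hN
    rw [← Finpartition.mem_part_iff_part_eq_part _ (hmem i hi) (hmem j hj),
      Finpartition.mem_part_ofSetSetoid_iff_rel]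
    simp only [hij, hi, hj, hmem, false_or, true_and]
    constructor
    · rintro (hh | ⟨a, b, ha, hb, h1, h2, h3⟩)
      · exact absurd (h.inj _ _ hj hi hh).symm hij
      · rw [h.inj _ _ ha hj h1, h.inj _ _ hb hi h2] at h3
        exact hr.symm _ _ h3
    · intro hh
      right
      exact ⟨j, i, hj, hi, rfl, rfl, hr.symm _ _ hh⟩
  · have := hr.supp' i j
    grind

theorem card_conf {N K : ℕ} {p : ℕ → ℂ} (h : IsConf N K p) (hKN : K ≤ N) :
    Nat.card (NC ((Finset.range N).image p)) = RN 0 N K := by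
  rw [RN, ← Nat.card_coe_set_eq]
  refine Nat.card_congr (Equiv.ofBijective
    (fun π => (⟨prel N p π.1, prel_isR h hKN π.1 π.2⟩ : RSet 0 N K)) ⟨?_, ?_⟩)
  · intro π π' he
    exact Subtype.ext (prel_inj _ _ (Subtype.ext_iff.1 he))
  · rintro ⟨r, hr⟩
    obtain ⟨π, hπ⟩ := prel_surj h r hr
    exact ⟨⟨π, prel_nc h π (hπ ▸ hr)⟩, Subtype.ext hπ⟩

/-- The points of `S_{m,n}` in counterclockwise order. -/
noncomputable def Sp (m n i : ℕ) : ℂ := if i < m + 2 then Sx m i else Sy n (i - (m + 1))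

theorem Sconfig_eq (m n : ℕ) : Sconfig m n = (Finset.range (m + 2 + n)).image (Sp m n) := by
  ext z
  simp only [Sconfig, Finset.mem_union, Finset.mem_image, Finset.mem_range, Finset.mem_Icc]
  constructor
  · rintro (⟨k, hk, rfl⟩ | ⟨j, hj, rfl⟩)
    · exact ⟨k, by omega, by rw [Sp, if_pos hk]⟩
    · exact ⟨j + (m + 1), by omega, by rw [Sp, if_neg (by omega), Nat.add_sub_cancel]⟩
  · rintro ⟨i, hi, rfl⟩
    by_cases h : i < m + 2
    · left; exact ⟨i, h, by rw [Sp, if_pos h]⟩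
    · right; exact ⟨i - (m + 1), by omega, by rw [Sp, if_neg h]⟩

theorem Sx_re (m k : ℕ) : (Sx m k).re = -1 + 2 * (k : ℝ) / ((m : ℝ) + 1) := by
  have : Sx m k = ((-1 + 2 * (k : ℝ) / ((m : ℝ) + 1) : ℝ) : ℂ) := by
    unfold Sx; push_cast; ring
  rw [this, Complex.ofReal_re]

theorem Sx_im (m k : ℕ) : (Sx m k).im = 0 := by
  have : Sx m k = ((-1 + 2 * (k : ℝ) / ((m : ℝ) + 1) : ℝ) : ℂ) := by
    unfold Sx; push_cast; ring
  rw [this, Complex.ofReal_im]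

theorem Sy_eq (n j : ℕ) : Sy n j = Complex.exp (((Real.pi * j / (n + 1) : ℝ) : ℂ) * Complex.I) := by
  unfold Sy; push_cast; rfl

theorem Sy_re (n j : ℕ) : (Sy n j).re = Real.cos (Real.pi * j / (n + 1)) := by
  rw [Sy_eq, Complex.exp_ofReal_mul_I_re]

theorem Sy_im (n j : ℕ) : (Sy n j).im = Real.sin (Real.pi * j / (n + 1)) := by
  rw [Sy_eq, Complex.exp_ofReal_mul_I_im]

/-- Circle triangle area. -/
theorem circ_pos (α β γ : ℝ) (h1 : α < β) (h2 : β < γ) (h3 : γ < α + 2 * Real.pi) :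
    0 < (Real.cos β - Real.cos α) * (Real.sin γ - Real.sin α)
      - (Real.sin β - Real.sin α) * (Real.cos γ - Real.cos α) := by
  obtain ⟨u, hu⟩ : ∃ u, β = α + 2 * u := ⟨(β - α) / 2, by ring⟩
  obtain ⟨v, hv⟩ : ∃ v, γ = β + 2 * v := ⟨(γ - β) / 2, by ring⟩
  have key : (Real.cos β - Real.cos α) * (Real.sin γ - Real.sin α)
      - (Real.sin β - Real.sin α) * (Real.cos γ - Real.cos α) =
      4 * Real.sin u * Real.sin v * Real.sin (u + v) := by
    have e1 : (Real.cos β - Real.cos α) * (Real.sin γ - Real.sin α)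
      - (Real.sin β - Real.sin α) * (Real.cos γ - Real.cos α) =
      Real.sin (β - α) + Real.sin (γ - β) - Real.sin (γ - α) := by
      rw [Real.sin_sub, Real.sin_sub, Real.sin_sub]; ring
    rw [e1, show β - α = 2 * u by linarith, show γ - β = 2 * v by linarith,
      show γ - α = 2 * u + 2 * v by linarith, Real.sin_add, Real.sin_add, Real.sin_two_mul,
      Real.sin_two_mul, Real.cos_two_mul', Real.cos_two_mul']
    have hu := Real.sin_sq_add_cos_sq u
    have hv := Real.sin_sq_add_cos_sq v
    have a1 : Real.cos u ^ 2 = 1 - Real.sin u ^ 2 := by linarith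
    have a2 : Real.cos v ^ 2 = 1 - Real.sin v ^ 2 := by linarith
    rw [a1, a2]
    ring
  rw [key]
  have := Real.sin_pos_of_pos_of_lt_pi (x := u) (by linarith) (by linarith)
  have := Real.sin_pos_of_pos_of_lt_pi (x := v) (by linarith) (by linarith)
  have := Real.sin_pos_of_pos_of_lt_pi (x := u + v) (by linarith) (by linarith)
  positivity

theorem Sp_conf (m n : ℕ) : IsConf (m + 2 + n) (m + 2) (Sp m n) := by
  have ang_pos : ∀ j : ℕ, 0 < j → 0 < Real.pi * j / (n + 1) := by
    intro j hj
    have : (0 : ℝ) < j := by exact_mod_cast hj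
    have := Real.pi_pos
    positivity
  have ang_lt : ∀ j : ℕ, j < n + 1 → Real.pi * j / (n + 1) < Real.pi := by
    intro j hj
    have : (j : ℝ) < n + 1 := by exact_mod_cast hj
    rw [div_lt_iff₀ (by positivity)]
    exact mul_lt_mul_of_pos_left this Real.pi_pos
  have ang_mono : ∀ i j : ℕ, i < j → Real.pi * i / (n + 1) < Real.pi * j / (n + 1) := by
    intro i j hij
    have : (i : ℝ) < j := by exact_mod_cast hij
    have := mul_lt_mul_of_pos_left this Real.pi_pos
    gcongr
  have x_mono : ∀ i j : ℕ, i < j → (Sx m i).re < (Sx m j).re := by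
    intro i j hij
    rw [Sx_re, Sx_re]
    have : (i : ℝ) < j := by exact_mod_cast hij
    gcongr
  have y_im : ∀ j : ℕ, 0 < j → j < n + 1 → 0 < (Sy n j).im := by
    intro j h1 h2
    rw [Sy_im]
    exact Real.sin_pos_of_pos_of_lt_pi (ang_pos j h1) (ang_lt j h2)
  refine ⟨by omega, ?_, ?_, ?_, ?_⟩
  · intro a b c hab hbc hc hK
    have hC : Sp m n c = Sy n (c - (m + 1)) := by rw [Sp, if_neg (by omega)]
    rw [hC]
    by_cases hb : b < m + 2
    · have hA : Sp m n a = Sx m a := by rw [Sp, if_pos (by omega)]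
      have hB : Sp m n b = Sx m b := by rw [Sp, if_pos (by omega)]
      rw [hA, hB]
      unfold det3
      rw [Sx_im, Sx_im]
      have h1 := x_mono a b hab
      have h2 := y_im (c - (m + 1)) (by omega) (by omega)
      have := mul_pos (sub_pos.2 h1) h2
      linarith
    have hB : Sp m n b = Sy n (b - (m + 1)) := by rw [Sp, if_neg (by omega)]
    rw [hB]
    have q1 := ang_pos (b - (m + 1)) (by omega)
    have q2 := ang_mono (b - (m + 1)) (c - (m + 1)) (by omega)
    have q3 := ang_lt (c - (m + 1)) (by omega)
    by_cases ha : a < m + 2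
    · have hA : Sp m n a = Sx m a := by rw [Sp, if_pos (by omega)]
      rw [hA]
      have b1 : -1 ≤ (Sx m a).re := by
        rw [Sx_re]
        have : 0 ≤ 2 * (a : ℝ) / ((m : ℝ) + 1) := by positivity
        linarith
      have b2 : (Sx m a).re ≤ 1 := by
        rw [Sx_re]
        have h' : (a : ℝ) ≤ m + 1 := by exact_mod_cast (by omega : a ≤ m + 1)
        have : 2 * (a : ℝ) / ((m : ℝ) + 1) ≤ 2 := by
          rw [div_le_iff₀ (by positivity)]
          linarith
        linarith
      unfold det3
      rw [Sx_im, Sy_re, Sy_im, Sy_re, Sy_im]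
      generalize (Sx m a).re = t at *
      generalize Real.pi * ((b - (m + 1) : ℕ) : ℝ) / (n + 1) = β at *
      generalize Real.pi * ((c - (m + 1) : ℕ) : ℝ) / (n + 1) = γ at *
      have c1 := circ_pos 0 β γ q1 q2 (by linarith)
      have c2 := circ_pos (-Real.pi) β γ (by linarith) q2 (by linarith)
      rw [Real.cos_zero, Real.sin_zero] at c1
      rw [Real.cos_neg, Real.sin_neg, Real.cos_pi, Real.sin_pi] at c2
      rcases le_or_gt (Real.sin γ - Real.sin β) 0 with hs | hs
      · nlinarith
      · nlinarith
    · have hA : Sp m n a = Sy n (a - (m + 1)) := by rw [Sp, if_neg (by omega)]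
      rw [hA]
      have q0 := ang_pos (a - (m + 1)) (by omega)
      have q4 := ang_mono (a - (m + 1)) (b - (m + 1)) (by omega)
      unfold det3
      rw [Sy_re, Sy_im, Sy_re, Sy_im, Sy_re, Sy_im]
      exact circ_pos _ _ _ q4 q2 (by linarith [Real.pi_pos])
  · intro i hi
    rw [Sp, if_pos hi, Sx_im]
  · intro i j hij hj
    rw [Sp, if_pos (by omega), Sp, if_pos hj]
    exact x_mono i j hij
  · intro i h1 h2
    rw [Sp, if_neg (by omega)]
    exact y_im _ (by omega) (by omega)

theorem card_S (m n : ℕ) : Nat.card (NC (Sconfig m n)) = RN 0 (m + 2 + n) (m + 2) := by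
  rw [Sconfig_eq]
  exact card_conf (Sp_conf m n) (by omega)

/-- For `m, n ≥ 1`,
`s_{m,n} = 2 s_{m-1,n} + Σ_{k=1}^{n} s_{m-1,k-1} C_{n-k+1}` where
`s_{m,n} = |NC(S_{m,n})|` and `C_j` is the `j`-th Catalan number. -/
theorem nc_S_card_recursion (m n : ℕ) (hm : 1 ≤ m) (hn : 1 ≤ n) :
    Nat.card (NC (Sconfig m n)) =
      2 * Nat.card (NC (Sconfig (m - 1) n)) +
        ∑ k ∈ Finset.Icc 1 n,
          Nat.card (NC (Sconfig (m - 1) (k - 1))) * catalan (n - k + 1) := by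
  rw [card_S, card_S, RN_main m n hm]
  simp only [card_S]
end
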